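/- arXiv:1303.4040 — 2 statements merged into one kernel-verified Lean document; each statement's English description precedes it below -/
import Mathlib

section
/- Let h(t) = e^{-t²} for t > 0. Then for every natural number N there exist complex linear subspaces L₊, L₋ ⊆ C_c^∞((0,∞)), each of dimension N, such that Q_h[f] > 0 for every nonzero f ∈ L₊ and Q_h[f] < 0 for every nonzero f ∈ L₋. Consequently the Hankel operator with the Gaussian kernel e^{-t²} has infinitely many positive and infinitely many negative eigenvalues. -/
open MeasureTheory
open scoped ComplexOrder

noncomputable section

/-- Complex-valued test functions: smooth, compactly supported, support inside `(0,∞)`. -/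
def IsTestFun (f : ℝ → ℂ) : Prop :=
  ContDiff ℝ (⊤ : ℕ∞) f ∧ HasCompactSupport f ∧ tsupport f ⊆ Set.Ioi 0

/-- The Hankel quadratic form `Q_h[f] = ∫₀^∞∫₀^∞ h(t+s) f(s) conj(f(t)) ds dt`. -/
def hankelQF (h : ℝ → ℂ) (f : ℝ → ℂ) : ℂ :=
  ∫ t in Set.Ioi (0:ℝ), ∫ s in Set.Ioi (0:ℝ), h (t + s) * f s * (starRingEnd ℂ) (f t)

/-!
Conjugating with the weight `e^{t²}` turns the Gaussian kernel `e^{-(t+s)²}` into `e^{-2ts}`, on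
which dilations act. Hence, for a bump function `φ`, the functions `u_τ = e^{t²} U_τ φ` satisfy
`H(u_σ, u_τ) = F(σ + τ)` with `F 0 ≠ 0` and `F → 0` at `±∞`. For widely separated `τ_k > 0`, the
vectors `u_{τ_k} ± F(0) u_{-τ_k}` are therefore almost orthogonal for the form `H`, with
`H(v, v) ≈ ± 2 F(0)²`: both signs occur, with arbitrarily large multiplicity. The negative sign is
the positive one for the form `-H`.
-/

open Filter Topology Matrix

section SesquilinearForms

variable {𝕜 n : Type*} [RCLike 𝕜] [Fintype n]

theorem posDef_of_sum_norm_lt_re_diag [DecidableEq n] {A : Matrix n n 𝕜} (hA : A.IsHermitian)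
    (h : ∀ k, ∑ j ∈ Finset.univ.erase k, ‖A k j‖ < RCLike.re (A k k)) : A.PosDef := by
  refine hA.posDef_iff_eigenvalues_pos.2 fun i => ?_
  have heig : Module.End.HasEigenvalue (Matrix.toLin' A) (hA.eigenvalues i : 𝕜) := by
    rw [Module.End.hasEigenvalue_iff_mem_spectrum, Matrix.spectrum_toLin']
    exact hA.eigenvalues_mem_spectrum_real i
  obtain ⟨k, hk⟩ := eigenvalue_mem_ball heig
  have hdist : RCLike.re (A k k) - hA.eigenvalues i ≤ ∑ j ∈ Finset.univ.erase k, ‖A k j‖ := by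
    rw [mem_closedBall_iff_norm'] at hk
    simpa using (RCLike.re_le_norm _).trans hk
  linarith [h k]

theorem eventually_posDef_of_tendsto_diagonal {ι α : Type*} [Finite ι] [DecidableEq ι]
    {l : Filter α} {A : α → Matrix ι ι 𝕜} {d : ι → ℝ} (hA : ∀ x, (A x).IsHermitian)
    (hd : ∀ i, 0 < d i) (h : Tendsto A l (𝓝 (diagonal fun i => (d i : 𝕜)))) :
    ∀ᶠ x in l, (A x).PosDef := by
  have := Fintype.ofFinite ι
  have hentry (i j : ι) : Tendsto (fun x => A x i j) l (𝓝 (diagonal (fun i => (d i : 𝕜)) i j)) :=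
    tendsto_pi_nhds.1 (tendsto_pi_nhds.1 h i) j
  have hdominant (k : ι) :
      ∀ᶠ x in l, ∑ j ∈ Finset.univ.erase k, ‖A x k j‖ < RCLike.re (A x k k) := by
    refine (tendsto_finsetSum _ fun j _ => (hentry k j).norm).eventually_lt
      ((RCLike.continuous_re.tendsto _).comp (hentry k k)) ?_
    rw [Finset.sum_eq_zero fun j hj => by simp [(Finset.ne_of_mem_erase hj).symm]]
    simpa using hd k
  filter_upwards [eventually_all.2 hdominant] with x hx
  exact posDef_of_sum_norm_lt_re_diag (hA x) hx

variable {V : Type*} [AddCommGroup V] [Module 𝕜 V] (B : V →ₗ⋆[𝕜] V →ₗ[𝕜] 𝕜)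

theorem sesqForm_sum_smul_self (v : n → V) (c : n → 𝕜) :
    B (∑ i, c i • v i) (∑ i, c i • v i) = star c ⬝ᵥ (of fun i j => B (v i) (v j)) *ᵥ c := by
  simp only [map_sum, map_smulₛₗ, LinearMap.sum_apply, LinearMap.smul_apply, RingHom.id_apply,
    smul_eq_mul, dotProduct, mulVec, of_apply, Pi.star_apply, RCLike.star_def, Finset.mul_sum]
  rw [Finset.sum_comm]
  exact Finset.sum_congr rfl fun i _ => Finset.sum_congr rfl fun j _ => by ring

theorem exists_submodule_pos_of_posDef_gram {v : n → V}
    (hv : (of fun i j => B (v i) (v j)).PosDef) :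
    ∃ L : Submodule 𝕜 V, Module.finrank 𝕜 L = Fintype.card n ∧ ∀ f ∈ L, f ≠ 0 → 0 < B f f := by
  have hpos {c : n → 𝕜} (hc : c ≠ 0) : 0 < B (∑ i, c i • v i) (∑ i, c i • v i) := by
    rw [sesqForm_sum_smul_self]
    exact hv.dotProduct_mulVec_pos hc
  have hli : LinearIndependent 𝕜 v := by
    refine Fintype.linearIndependent_iff.2 fun c hc => congrFun ?_
    by_contra hne
    simpa [hc] using hpos hne
  refine ⟨Submodule.span 𝕜 (Set.range v), finrank_span_eq_card hli, fun f hf hf0 => ?_⟩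
  obtain ⟨c, rfl⟩ := (Submodule.mem_span_range_iff_exists_fun 𝕜).1 hf
  exact hpos fun hc => hf0 (by simp [hc])

theorem tendsto_comp_mul_atTop_of_tendsto_cocompact {E : Type*} [TopologicalSpace E] {F : ℝ → E}
    {y : E} (hF : Tendsto F (cocompact ℝ) (𝓝 y)) {m : ℝ} (hm : m ≠ 0) :
    Tendsto (fun T => F (m * T)) atTop (𝓝 y) :=
  hF.comp ((tendsto_cocompact_mul_left₀ hm).comp (tendsto_id.mono_left atTop_le_cocompact))

-- Of the four arguments of `F`, only those that vanish identically in `T` survive in the limit.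
theorem tendsto_symmetrized_hankel_entry {F : ℝ → ℝ} (hF : Tendsto F (cocompact ℝ) (𝓝 0))
    {x y : ℝ} (hx : 0 < x) (hy : 0 < y) (c : ℝ) :
    Tendsto (fun T => F ((x + y) * T) + c * (F ((x - y) * T) + F ((y - x) * T)) +
      c ^ 2 * F (-(x + y) * T)) atTop (𝓝 (if x = y then 2 * c * F 0 else 0)) := by
  have hsum : x + y ≠ 0 := by positivity
  have hpos := tendsto_comp_mul_atTop_of_tendsto_cocompact hF hsum
  have hneg := (tendsto_comp_mul_atTop_of_tendsto_cocompact hF (neg_ne_zero.2 hsum)).const_mul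
    (c ^ 2)
  rcases eq_or_ne x y with rfl | hxy
  · have hlim := (hpos.add_const (c * (F 0 + F 0))).add hneg
    rw [show 0 + c * (F 0 + F 0) + c ^ 2 * 0 = 2 * c * F 0 by ring] at hlim
    simpa only [sub_self, zero_mul, if_true] using hlim
  · have hsub := tendsto_comp_mul_atTop_of_tendsto_cocompact hF (sub_ne_zero.2 hxy)
    have hsub' := tendsto_comp_mul_atTop_of_tendsto_cocompact hF (sub_ne_zero.2 hxy.symm)
    simpa only [add_zero, mul_zero, if_neg hxy] using
      (hpos.add ((hsub.add hsub').const_mul c)).add hneg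

theorem exists_submodule_pos_of_hankel_family {u : ℝ → V} {F : ℝ → ℝ}
    (hB : ∀ σ τ, B (u σ) (u τ) = F (σ + τ)) (hF : Tendsto F (cocompact ℝ) (𝓝 0))
    (hF0 : F 0 ≠ 0) (N : ℕ) :
    ∃ L : Submodule 𝕜 V, Module.finrank 𝕜 L = N ∧ ∀ f ∈ L, f ≠ 0 → 0 < B f f := by
  let x (k : Fin N) : ℝ := k + 1
  have hx (k : Fin N) : 0 < x k := by positivity
  have hxinj (k l : Fin N) : x k = x l ↔ k = l := by simp [x, Fin.val_inj]
  let v (T : ℝ) (k : Fin N) : V := u (x k * T) + (F 0 : 𝕜) • u (-x k * T)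
  let G (T : ℝ) (k l : Fin N) : ℝ :=
    F ((x k + x l) * T) + F 0 * (F ((x k - x l) * T) + F ((x l - x k) * T)) +
      F 0 ^ 2 * F (-(x k + x l) * T)
  have hgram (T : ℝ) (k l : Fin N) : B (v T k) (v T l) = G T k l := by
    simp only [v, G, map_add, map_smulₛₗ, LinearMap.add_apply, LinearMap.smul_apply, hB,
      RCLike.conj_ofReal, RingHom.id_apply, smul_eq_mul]
    push_cast
    ring_nf
  have hherm (T : ℝ) : (of fun k l => B (v T k) (v T l)).IsHermitian := by
    refine IsHermitian.ext fun k l => ?_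
    simp only [of_apply, hgram, RCLike.star_def, RCLike.conj_ofReal, G]
    ring_nf
  have hlim : Tendsto (fun T => of fun k l => B (v T k) (v T l)) atTop
      (𝓝 (diagonal fun _ => ((2 * F 0 * F 0 : ℝ) : 𝕜))) := by
    refine tendsto_pi_nhds.2 fun k => tendsto_pi_nhds.2 fun l => ?_
    have hentry := (RCLike.continuous_ofReal (K := 𝕜)).tendsto _ |>.comp
      (tendsto_symmetrized_hankel_entry hF (hx k) (hx l) (F 0))
    simpa only [of_apply, hgram, diagonal_apply, hxinj, apply_ite (RCLike.ofReal (K := 𝕜)),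
      RCLike.ofReal_zero, G, Function.comp_def] using hentry
  have hdiag : 0 < 2 * F 0 * F 0 := by linarith [mul_self_pos.2 hF0]
  obtain ⟨T, hT⟩ := (eventually_posDef_of_tendsto_diagonal hherm (fun _ => hdiag) hlim).exists
  simpa only [Fintype.card_fin] using exists_submodule_pos_of_posDef_gram B hT

end SesquilinearForms

section Dilations

/-- The dilation group `(U_τ f)(t) = e^{τ/2} f(e^τ t)`, normalised to preserve `L²(0,∞)`. -/
def dilate (τ : ℝ) (f : ℝ → ℝ) (t : ℝ) : ℝ := Real.exp (τ / 2) * f (Real.exp τ * t)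

/-- The bilinear form `∬ κ(xy) f(x) g(y) dx dy` of a kernel depending on the product only. -/
def mulKernelForm (κ f g : ℝ → ℝ) : ℝ := ∫ z : ℝ × ℝ, κ (z.1 * z.2) * (f z.1 * g z.2)

theorem dilate_zero (f : ℝ → ℝ) : dilate 0 f = f := by
  ext t
  simp [dilate]

theorem dilate_apply_of_pos (τ : ℝ) (f : ℝ → ℝ) {p : ℝ} (hp : 0 < p) :
    dilate τ f p = (√p)⁻¹ * dilate (τ + Real.log p) f 1 := by
  have hsqrt : Real.exp (Real.log p / 2) = √p := by rw [Real.exp_half, Real.exp_log hp]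
  rw [dilate, dilate, add_div, Real.exp_add, Real.exp_add, Real.exp_log hp, hsqrt]
  field_simp

theorem integral_comp_mul_prod {E : Type*} [NormedAddCommGroup E] [NormedSpace ℝ E] {a b : ℝ}
    (ha : a ≠ 0) (hb : b ≠ 0) (G : ℝ × ℝ → E) :
    ∫ z : ℝ × ℝ, G (a * z.1, b * z.2) = |(a * b)⁻¹| • ∫ z, G z := by
  let e : ℝ × ℝ ≃ₜ ℝ × ℝ := (Homeomorph.mulLeft₀ a ha).prodCongr (Homeomorph.mulLeft₀ b hb)
  have hmap : Measure.map e volume = ENNReal.ofReal |(a * b)⁻¹| • volume := by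
    rw [Measure.volume_eq_prod]
    change Measure.map (Prod.map (a * ·) (b * ·)) _ = _
    rw [← Measure.map_prod_map _ _ (by fun_prop) (by fun_prop), Real.map_volume_mul_left ha,
      Real.map_volume_mul_left hb, Measure.prod_smul_left, Measure.prod_smul_right, smul_smul,
      ← ENNReal.ofReal_mul (abs_nonneg _), ← abs_mul, mul_inv]
  calc ∫ z : ℝ × ℝ, G (a * z.1, b * z.2) = ∫ z, G z ∂(Measure.map e volume) :=
        (e.measurableEmbedding.integral_map G).symm
    _ = |(a * b)⁻¹| • ∫ z, G z := by
        rw [hmap, integral_smul_measure, ENNReal.toReal_ofReal (abs_nonneg _)]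

theorem mulKernelForm_dilate (κ f g : ℝ → ℝ) (σ τ : ℝ) :
    mulKernelForm κ (dilate σ f) (dilate τ g) = mulKernelForm (dilate (-(σ + τ)) κ) f g := by
  have hexp : Real.exp (σ / 2) * Real.exp (τ / 2) * Real.exp (-(σ + τ)) =
      Real.exp (-(σ + τ) / 2) := by
    simp only [← Real.exp_add]
    ring_nf
  let G (z : ℝ × ℝ) : ℝ := κ (Real.exp (-(σ + τ)) * (z.1 * z.2)) * (f z.1 * g z.2)
  calc mulKernelForm κ (dilate σ f) (dilate τ g)
      = ∫ z : ℝ × ℝ, Real.exp (σ / 2) * Real.exp (τ / 2) *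
          G (Real.exp σ * z.1, Real.exp τ * z.2) := by
        refine integral_congr_ae (.of_forall fun z => ?_)
        have : Real.exp (-(σ + τ)) * ((Real.exp σ * z.1) * (Real.exp τ * z.2)) = z.1 * z.2 := by
          rw [mul_mul_mul_comm, ← Real.exp_add, ← mul_assoc, ← Real.exp_add]
          simp
        simp only [G, this, dilate]
        ring
    _ = Real.exp (-(σ + τ) / 2) * ∫ z, G z := by
        rw [integral_const_mul, integral_comp_mul_prod (Real.exp_ne_zero σ) (Real.exp_ne_zero τ),
          ← Real.exp_add σ, ← Real.exp_neg, Real.abs_exp, smul_eq_mul, ← mul_assoc, hexp]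
    _ = mulKernelForm (dilate (-(σ + τ)) κ) f g := by
        rw [mulKernelForm, ← integral_const_mul]
        simp only [G, dilate, mul_assoc]

theorem exists_abs_dilate_le {κ : ℝ → ℝ} (hκ : Continuous κ)
    (hdecay : Tendsto (fun τ => dilate τ κ 1) (cocompact ℝ) (𝓝 0)) :
    ∃ C, ∀ τ p, 0 < p → |dilate τ κ p| ≤ C * (√p)⁻¹ := by
  let K : ZeroAtInftyContinuousMap ℝ ℝ :=
    ⟨⟨fun τ => dilate τ κ 1, by unfold dilate; fun_prop⟩, hdecay⟩
  refine ⟨‖K.toBCF‖, fun τ p hp => ?_⟩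
  rw [dilate_apply_of_pos _ _ hp, abs_mul, abs_of_nonneg (by positivity), mul_comm]
  gcongr
  exact K.toBCF.norm_coe_le_norm (τ + Real.log p)

theorem continuous_dilate (τ : ℝ) {f : ℝ → ℝ} (hf : Continuous f) : Continuous (dilate τ f) := by
  unfold dilate
  fun_prop

theorem hasCompactSupport_mul_prod {E : Type*} [MulZeroClass E] {X Y : Type*} [TopologicalSpace X]
    [TopologicalSpace Y] [R1Space X] [R1Space Y] {f : X → E} {g : Y → E} (hf : HasCompactSupport f)
    (hg : HasCompactSupport g) :
    HasCompactSupport fun z : X × Y => f z.1 * g z.2 := by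
  refine .intro (hf.isCompact.prod hg.isCompact) fun z hz => ?_
  rcases not_and_or.1 hz with hz | hz <;> simp [image_eq_zero_of_notMem_tsupport hz]

theorem integrable_mul_mul_of_hasCompactSupport {X Y E : Type*} [TopologicalSpace X]
    [TopologicalSpace Y] [T2Space X] [T2Space Y] [MeasurableSpace (X × Y)]
    [OpensMeasurableSpace (X × Y)] {μ : Measure (X × Y)} [IsFiniteMeasureOnCompacts μ]
    [NormedRing E] {f : X → E} {g : Y → E} {k : X × Y → E} (hf : Continuous f)
    (hf' : HasCompactSupport f) (hg : Continuous g) (hg' : HasCompactSupport g)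
    (hk : ContinuousOn k (tsupport f ×ˢ tsupport g)) :
    Integrable (fun z => k z * (f z.1 * g z.2)) μ := by
  have hon : IntegrableOn (fun z => k z * (f z.1 * g z.2)) (tsupport f ×ˢ tsupport g) μ :=
    (hk.mul (by fun_prop)).integrableOn_compact (hf'.isCompact.prod hg'.isCompact)
  refine hon.integrable_of_forall_notMem_eq_zero fun z hz => ?_
  rcases not_and_or.1 hz with hz | hz <;> simp [image_eq_zero_of_notMem_tsupport hz]

theorem tendsto_mulKernelForm_dilate {κ f g : ℝ → ℝ} (hκ : Continuous κ)
    (hdecay : Tendsto (fun τ => dilate τ κ 1) (cocompact ℝ) (𝓝 0))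
    (hf : Continuous f) (hf' : HasCompactSupport f) (hfpos : tsupport f ⊆ Set.Ioi 0)
    (hg : Continuous g) (hg' : HasCompactSupport g) (hgpos : tsupport g ⊆ Set.Ioi 0) :
    Tendsto (fun τ => mulKernelForm (dilate τ κ) f g) (cocompact ℝ) (𝓝 0) := by
  obtain ⟨C, hC⟩ := exists_abs_dilate_le hκ hdecay
  have hsupp (z : ℝ × ℝ) (hz : f z.1 * g z.2 ≠ 0) : 0 < z.1 * z.2 :=
    mul_pos (hfpos (subset_tsupport f (left_ne_zero_of_mul hz)))
      (hgpos (subset_tsupport g (right_ne_zero_of_mul hz)))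
  have hbound : Integrable fun z : ℝ × ℝ => C * ‖(√(z.1 * z.2))⁻¹ * (f z.1 * g z.2)‖ := by
    refine (integrable_mul_mul_of_hasCompactSupport hf hf' hg hg' ?_).norm.const_mul C
    refine ContinuousOn.inv₀ (by fun_prop) fun z hz => ?_
    exact (Real.sqrt_pos.2 (mul_pos (hfpos hz.1) (hgpos hz.2))).ne'
  have : (cocompact ℝ).IsCountablyGenerated := by
    rw [cocompact_eq_atBot_atTop]
    infer_instance
  rw [← integral_zero (ℝ × ℝ) ℝ]
  refine tendsto_integral_filter_of_dominated_convergence _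
    (.of_forall fun τ => ?_) (.of_forall fun τ => .of_forall fun z => ?_) hbound
    (.of_forall fun z => ?_)
  · have := continuous_dilate τ hκ
    exact (by fun_prop : Continuous _).aestronglyMeasurable
  · rcases eq_or_ne (f z.1 * g z.2) 0 with hz | hz
    · simp [hz]
    · rw [norm_mul, norm_mul (√_)⁻¹, norm_inv, Real.norm_of_nonneg (Real.sqrt_nonneg _),
        ← mul_assoc]
      gcongr
      exact hC τ _ (hsupp z hz)
  · rcases eq_or_ne (f z.1 * g z.2) 0 with hz | hz
    · simp [hz]
    · have hshift :
          Tendsto (fun τ => dilate (τ + Real.log (z.1 * z.2)) κ 1) (cocompact ℝ) (𝓝 0) :=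
        hdecay.comp (Homeomorph.addRight _).isClosedEmbedding.tendsto_cocompact
      simpa [dilate_apply_of_pos _ κ (hsupp z hz)] using
        (hshift.const_mul _).mul_const (f z.1 * g z.2)

theorem mulKernelForm_self_pos {κ f : ℝ → ℝ} (hκ : Continuous κ) (hκpos : ∀ x, 0 < κ x)
    (hf : Continuous f) (hf' : HasCompactSupport f) (hf0 : ∀ x, 0 ≤ f x) {x : ℝ} (hx : f x ≠ 0) :
    0 < mulKernelForm κ f f := by
  refine Continuous.integral_pos_of_hasCompactSupport_nonneg_nonzero (x := (x, x)) (by fun_prop) ?_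
    (fun z => mul_nonneg (hκpos _).le (mul_nonneg (hf0 _) (hf0 _)))
    (mul_ne_zero (hκpos _).ne' (mul_ne_zero hx hx))
  exact (hasCompactSupport_mul_prod hf' hf').mul_left

end Dilations

section HankelForm

/-- The complex vector space of test functions on `(0,∞)`. -/
def testFunctions : Submodule ℂ (ℝ → ℂ) where
  carrier := {f | IsTestFun f}
  zero_mem' := ⟨contDiff_const, .zero, by simp [tsupport]⟩
  add_mem' hf hg := ⟨hf.1.add hg.1, hf.2.1.add hg.2.1,
    (tsupport_add _ _).trans (Set.union_subset hf.2.2 hg.2.2)⟩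
  smul_mem' c f hf := ⟨hf.1.const_smul c, hf.2.1.smul_left (f := fun _ => c),
    (tsupport_smul_subset_right (fun _ => c) f).trans hf.2.2⟩

theorem isTestFun_ofReal {f : ℝ → ℝ} (hf : ContDiff ℝ (⊤ : ℕ∞) f) (hf' : HasCompactSupport f)
    (hpos : tsupport f ⊆ Set.Ioi 0) : IsTestFun fun t => (f t : ℂ) :=
  ⟨Complex.ofRealCLM.contDiff.comp hf, hf'.comp_left Complex.ofReal_zero,
    (closure_mono (Function.support_comp_subset Complex.ofReal_zero f)).trans hpos⟩

theorem IsTestFun.mul_left {f w : ℝ → ℂ} (hf : IsTestFun f) (hw : ContDiff ℝ (⊤ : ℕ∞) w) :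
    IsTestFun fun t => w t * f t :=
  ⟨hw.mul hf.1, hf.2.1.mul_left, tsupport_mul_subset_right.trans hf.2.2⟩

theorem IsTestFun.comp_mul_left {f : ℝ → ℂ} (hf : IsTestFun f) {a : ℝ} (ha : 0 < a) :
    IsTestFun fun t => f (a * t) := by
  have hcompact : HasCompactSupport fun t => f (a * t) :=
    hf.2.1.comp_homeomorph (Homeomorph.mulLeft₀ a ha.ne')
  refine ⟨hf.1.comp (contDiff_const.mul contDiff_id), hcompact, fun t ht => ?_⟩
  have hat : a * t ∈ tsupport f :=
    tsupport_comp_subset_preimage f (f := fun t => a * t) (by fun_prop) ht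
  exact (mul_pos_iff_of_pos_left ha).1 (hf.2.2 hat)

theorem integrable_hankel_kernel (h : C(ℝ, ℂ)) {f g : ℝ → ℂ} (hf : IsTestFun f)
    (hg : IsTestFun g) :
    Integrable fun z : ℝ × ℝ => h (z.1 + z.2) * ((starRingEnd ℂ) (f z.1) * g z.2) :=
  integrable_mul_mul_of_hasCompactSupport (Complex.continuous_conj.comp hf.1.continuous)
    (hf.2.1.comp_left (map_zero _)) hg.1.continuous hg.2.1 (by fun_prop)

/-- The sesquilinear form on test functions, conjugate-linear in the first variable, whose
quadratic form is `hankelQF h`. -/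
def hankelForm (h : C(ℝ, ℂ)) : testFunctions →ₗ⋆[ℂ] testFunctions →ₗ[ℂ] ℂ :=
  LinearMap.mk₂'ₛₗ (starRingEnd ℂ) (RingHom.id ℂ)
    (fun f g => ∫ z : ℝ × ℝ, h (z.1 + z.2) * ((starRingEnd ℂ) (f.1 z.1) * g.1 z.2))
    (fun f₁ f₂ g => by
      rw [← integral_add (integrable_hankel_kernel h f₁.2 g.2)
        (integrable_hankel_kernel h f₂.2 g.2)]
      simp only [Submodule.coe_add, Pi.add_apply, map_add, add_mul, mul_add])
    (fun c f g => by
      rw [smul_eq_mul, ← integral_const_mul]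
      simp only [Submodule.coe_smul, Pi.smul_apply, smul_eq_mul, map_mul, mul_assoc,
        mul_left_comm])
    (fun f g₁ g₂ => by
      rw [← integral_add (integrable_hankel_kernel h f.2 g₁.2)
        (integrable_hankel_kernel h f.2 g₂.2)]
      simp only [Submodule.coe_add, Pi.add_apply, mul_add])
    (fun c f g => by
      rw [RingHom.id_apply, smul_eq_mul, ← integral_const_mul]
      simp only [Submodule.coe_smul, Pi.smul_apply, smul_eq_mul, mul_left_comm])

theorem hankelForm_apply (h : C(ℝ, ℂ)) (f g : testFunctions) : hankelForm h f g =
    ∫ z : ℝ × ℝ, h (z.1 + z.2) * ((starRingEnd ℂ) (f.1 z.1) * g.1 z.2) :=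
  rfl

theorem hankelForm_self (h : C(ℝ, ℂ)) (f : testFunctions) :
    hankelForm h f f = hankelQF h f := by
  have hzero {t : ℝ} (ht : t ∉ Set.Ioi (0 : ℝ)) : f.1 t = 0 :=
    image_eq_zero_of_notMem_tsupport fun hmem => ht (f.2.2.2 hmem)
  rw [hankelForm_apply, Measure.volume_eq_prod,
    integral_prod _ (integrable_hankel_kernel h f.2 f.2), hankelQF,
    setIntegral_eq_integral_of_forall_compl_eq_zero fun t ht => by simp [hzero ht]]
  congr 1 with t
  rw [setIntegral_eq_integral_of_forall_compl_eq_zero fun s hs => by simp [hzero hs]]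
  congr 1 with s
  ring

end HankelForm

section GaussianKernel

/-- The Gaussian kernel `t ↦ e^{-a t²}`. -/
def gaussianKernel (a : ℝ) : C(ℝ, ℂ) :=
  ⟨fun t => (Real.exp (-a * t ^ 2) : ℝ), by fun_prop⟩

/-- The functions `e^{a t²} (U_τ φ)(t)`; the weight turns `gaussianKernel a` into the kernel
`e^{-2a t s}`, on which the dilations act. -/
def gaussianDilate (a : ℝ) {φ : ℝ → ℝ} (hφ : IsTestFun fun t => (φ t : ℂ)) (τ : ℝ) :
    testFunctions :=
  ⟨fun t => ((Real.exp (a * t ^ 2) * dilate τ φ t : ℝ) : ℂ), by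
    have hw : ContDiff ℝ (⊤ : ℕ∞) fun t : ℝ =>
        ((Real.exp (a * t ^ 2) * Real.exp (τ / 2) : ℝ) : ℂ) :=
      Complex.ofRealCLM.contDiff.comp
        (((contDiff_const.mul (contDiff_id.pow 2)).exp).mul contDiff_const)
    change IsTestFun _
    simpa only [dilate, Complex.ofReal_mul, mul_assoc] using
      (hφ.comp_mul_left (Real.exp_pos τ)).mul_left hw⟩

theorem hankelForm_gaussianDilate (a : ℝ) {φ : ℝ → ℝ} (hφ : IsTestFun fun t => (φ t : ℂ))
    (σ τ : ℝ) :
    hankelForm (gaussianKernel a) (gaussianDilate a hφ σ) (gaussianDilate a hφ τ) =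
      mulKernelForm (dilate (-(σ + τ)) fun x => Real.exp (-(2 * a) * x)) φ φ := by
  rw [← mulKernelForm_dilate, hankelForm_apply, mulKernelForm, ← integral_complex_ofReal]
  congr 1 with z
  have hexp : Real.exp (-(2 * a) * (z.1 * z.2)) = Real.exp (-a * (z.1 + z.2) ^ 2) *
      (Real.exp (a * z.1 ^ 2) * Real.exp (a * z.2 ^ 2)) := by
    rw [← Real.exp_add, ← Real.exp_add]
    ring_nf
  simp only [gaussianKernel, gaussianDilate, ContinuousMap.coe_mk, Complex.conj_ofReal, hexp]
  push_cast
  ring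

theorem tendsto_dilate_exp_neg_mul_cocompact {b : ℝ} (hb : 0 < b) :
    Tendsto (fun τ => dilate τ (fun x => Real.exp (-b * x)) 1) (cocompact ℝ) (𝓝 0) := by
  rw [cocompact_eq_atBot_atTop]
  refine Tendsto.sup ?_ ?_
  · have hexp : Tendsto (fun τ : ℝ => Real.exp (τ / 2)) atBot (𝓝 0) :=
      Real.tendsto_exp_atBot.comp (tendsto_id.atBot_div_const two_pos)
    refine squeeze_zero (fun τ => by simp only [dilate]; positivity) (fun τ => ?_) hexp
    refine mul_le_of_le_one_right (Real.exp_nonneg _) (Real.exp_le_one_iff.2 ?_)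
    nlinarith [Real.exp_pos τ]
  · refine ((tendsto_rpow_mul_exp_neg_mul_atTop_nhds_zero (1 / 2) b hb).comp
      Real.tendsto_exp_atTop).congr fun τ => ?_
    simp [dilate, ← Real.exp_mul, div_eq_mul_inv]

theorem exists_submodule_mul_hankelQF_gaussian_pos {a : ℝ} (ha : 0 < a) {c : ℝ} (hc : c ≠ 0)
    (N : ℕ) :
    ∃ L : Submodule ℂ (ℝ → ℂ), (∀ f ∈ L, IsTestFun f) ∧ Module.finrank ℂ L = N ∧
      ∀ f ∈ L, f ≠ 0 → 0 < (c : ℂ) * hankelQF (gaussianKernel a) f := by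
  obtain ⟨φ, hpos, hcompact, hsmooth, hrange, hone⟩ :=
    exists_contDiff_tsupport_subset (n := ⊤) (Ioi_mem_nhds (zero_lt_one (α := ℝ)))
  have hφ := isTestFun_ofReal hsmooth hcompact hpos
  let κ (x : ℝ) : ℝ := Real.exp (-(2 * a) * x)
  let F (τ : ℝ) : ℝ := c * mulKernelForm (dilate (-τ) κ) φ φ
  have hform (σ τ : ℝ) : ((c : ℂ) • hankelForm (gaussianKernel a)) (gaussianDilate a hφ σ)
      (gaussianDilate a hφ τ) = F (σ + τ) := by
    simp [F, κ, hankelForm_gaussianDilate]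
  have hlim : Tendsto F (cocompact ℝ) (𝓝 0) := by
    have hκ := tendsto_mulKernelForm_dilate (κ := κ) (by fun_prop)
      (tendsto_dilate_exp_neg_mul_cocompact (mul_pos two_pos ha))
      hsmooth.continuous hcompact hpos hsmooth.continuous hcompact hpos
    rw [← mul_zero c]
    exact (hκ.comp (Homeomorph.neg ℝ).isClosedEmbedding.tendsto_cocompact).const_mul c
  have hF0 : F 0 ≠ 0 := by
    have hκ := mulKernelForm_self_pos (κ := κ) (by fun_prop) (fun x => Real.exp_pos _)
      hsmooth.continuous hcompact (fun t => (hrange ⟨t, rfl⟩).1) (x := 1) (by simp [hone])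
    simpa [F, dilate_zero] using ⟨hc, hκ.ne'⟩
  obtain ⟨L, hL, hLpos⟩ := exists_submodule_pos_of_hankel_family _ hform hlim hF0 N
  refine ⟨L.map testFunctions.subtype, ?_, by rwa [Submodule.finrank_map_subtype_eq], ?_⟩
  · rintro _ ⟨f, -, rfl⟩
    exact f.2
  · rintro _ ⟨f, hf, rfl⟩ hf0
    simpa [hankelForm_self] using hLpos f hf fun h => hf0 (by simp [h])

end GaussianKernel

/-- For the Gaussian kernel `h(t) = e^{-t²}`, for every `N` there are `N`-dimensional
subspaces of test functions on which the Hankel form is strictly positive, respectively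
strictly negative; hence the corresponding Hankel operator has infinitely many positive
and infinitely many negative eigenvalues. -/
theorem gaussian_hankel_infinite_signature (N : ℕ) :
    (∃ Lp : Submodule ℂ (ℝ → ℂ), (∀ f ∈ Lp, IsTestFun f) ∧ Module.finrank ℂ Lp = N ∧
      ∀ f ∈ Lp, f ≠ 0 → 0 < hankelQF (fun t : ℝ => ((Real.exp (-t ^ 2) : ℝ) : ℂ)) f)
    ∧ (∃ Lm : Submodule ℂ (ℝ → ℂ), (∀ f ∈ Lm, IsTestFun f) ∧ Module.finrank ℂ Lm = N ∧
      ∀ f ∈ Lm, f ≠ 0 → hankelQF (fun t : ℝ => ((Real.exp (-t ^ 2) : ℝ) : ℂ)) f < 0) := by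
  obtain ⟨Lp, hp, hpN, hpos⟩ :=
    exists_submodule_mul_hankelQF_gaussian_pos one_pos (one_ne_zero (α := ℝ)) N
  obtain ⟨Lm, hm, hmN, hneg⟩ :=
    exists_submodule_mul_hankelQF_gaussian_pos one_pos (neg_ne_zero.2 (one_ne_zero (α := ℝ))) N
  exact ⟨⟨Lp, hp, hpN, fun f hf hf0 => by simpa [gaussianKernel] using hpos f hf hf0⟩,
    ⟨Lm, hm, hmN, fun f hf hf0 => by simpa [gaussianKernel] using hneg f hf hf0⟩⟩
end
end

section
/- Let h ∈ L¹_loc((0,∞)) be real-valued and suppose there exists κ ∈ ℝ with ∫₀^∞ |h(t)| (1+|ln t|)^{-κ} dt < ∞. If Q_h[f] ≥ 0 for all f ∈ C_c^∞((0,∞)), then there exist a positive Borel measure m on (0,∞) and a real number ϰ such that ∫₀^∞ (1+|ln λ|)^{-ϰ} λ^{-1} dm(λ) < ∞ and h(t) = ∫₀^∞ e^{-tλ} dm(λ) for almost every t > 0. -/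
/-!
For a real bump `β`, the form `Q_h` evaluated at linear combinations of translates of `β` shows that
the mollification `G u = ∫ h(x) (β ⋆ β)(x - u) dx` has positive semidefinite Hankel matrices
`G (t + (i + j) δ)`. The positive functional `L` with moments `L (X ^ n) = u n = G (t + n δ)`
satisfies Cauchy–Schwarz, and iterating it along powers of two turns the subexponential growth of
`u`, a consequence of the weighted integrability of `h`, into `L (p² X) ≤ L (p²)`. Hence `X` acts as
a contraction, so that `(-1)^l Δ^l u ≥ 0` and `G` is completely monotone.

As `β ⋆ β` shrinks to a Dirac mass, `G` tends to `h` at Lebesgue points. Complete monotonicity is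
a closed condition and bounds `G` locally uniformly, so a limit along an ultrafilter exists at every
point and `h` agrees a.e. with a completely monotone function. Bernstein's theorem, obtained from
Hausdorff's moment problem on `[0, 1]` by the substitution `y = e^{-l}`, represents it by a measure
on `[0, ∞)`. Tonelli's theorem then rewrites `∫ h(t) (1 + |ln t|)^{-κ} dt` as the integral of the
Laplace transform of the weight; this transform is infinite at `0`, which excludes an atom there,
and for `l > 0` the range `1/l ≤ t ≤ 2/l` alone contributes a multiple of `(1 + |ln l|)^{-κ} l⁻¹`.
-/

open MeasureTheory
open scoped ComplexOrder

noncomputable section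

open Filter Topology Polynomial
open scoped fwdDiff Convolution Pointwise

/-! ### Hausdorff's moment problem on the unit interval -/

/-- The linear functional on real polynomials whose moments `X ^ n ↦ a n` are prescribed. -/
def momentFunctional (a : ℕ → ℝ) : ℝ[X] →ₗ[ℝ] ℝ :=
  (basisMonomials ℝ).constr ℝ a

section MomentFunctional

variable (a : ℕ → ℝ)

lemma momentFunctional_monomial (n : ℕ) (c : ℝ) :
    momentFunctional a (monomial n c) = c * a n := by
  have h : momentFunctional a (monomial n 1) = a n := by
    simpa [momentFunctional] using (basisMonomials ℝ).constr_basis ℝ a n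
  rw [← h, ← smul_eq_mul, ← map_smul, smul_monomial, smul_eq_mul, mul_one]

lemma momentFunctional_X_pow (n : ℕ) : momentFunctional a (X ^ n) = a n := by
  rw [X_pow_eq_monomial, momentFunctional_monomial, one_mul]

lemma momentFunctional_X_pow_mul_one_sub_X_pow (m l : ℕ) :
    momentFunctional a (X ^ m * (1 - X) ^ l) = (-1) ^ l * Δ_[1] ^[l] a m := by
  induction l generalizing m with
  | zero => simp [momentFunctional_X_pow]
  | succ l ih =>
    have hsplit : (X ^ m * (1 - X) ^ (l + 1) : ℝ[X]) =
        X ^ m * (1 - X) ^ l - X ^ (m + 1) * (1 - X) ^ l := by ring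
    rw [hsplit, map_sub, ih, ih, Function.iterate_succ_apply', fwdDiff]
    ring

lemma sum_descFactorial_smul_bernsteinPolynomial (R : Type*) [CommRing R] (N j : ℕ) :
    ∑ k ∈ Finset.range (N + 1), k.descFactorial j • bernsteinPolynomial R N k =
      N.descFactorial j • X ^ j := by
  induction j generalizing N with
  | zero => simp [bernsteinPolynomial.sum]
  | succ j ih =>
    cases N with
    | zero => simp
    | succ N =>
      have hterm (k : ℕ) :
          (k + 1).descFactorial (j + 1) • bernsteinPolynomial R (N + 1) (k + 1) =
            (N + 1) • (X * (k.descFactorial j • bernsteinPolynomial R N k)) := by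
        have hchoose : ((N + 1).choose (k + 1) * (k + 1) : R[X]) = (N + 1) * N.choose k := by
          have h := congrArg (Nat.cast (R := R[X])) (Nat.add_one_mul_choose_eq N k)
          push_cast at h
          exact h.symm
        simp only [bernsteinPolynomial, Nat.succ_descFactorial_succ, nsmul_eq_mul, Nat.cast_mul,
          Nat.cast_succ, Nat.add_sub_add_right, pow_succ']
        linear_combination (k.descFactorial j * (X * X ^ k) * (1 - X) ^ (N - k)) * hchoose
      rw [Finset.sum_range_succ', Nat.zero_descFactorial_succ, zero_smul, add_zero]
      simp only [hterm, ← Finset.smul_sum, ← Finset.mul_sum, ih]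
      simp only [Nat.succ_descFactorial_succ, nsmul_eq_mul, Nat.cast_mul]
      ring

/-- The value of the moment functional at the `k`-th Bernstein polynomial of degree `N`, which is
the mass at `k / N` in Hausdorff's discrete approximation of a measure with moments `a`. -/
def bernsteinWeight (N k : ℕ) : ℝ :=
  momentFunctional a (bernsteinPolynomial ℝ N k)

lemma bernsteinWeight_nonneg (ha : ∀ m l : ℕ, 0 ≤ (-1) ^ l * Δ_[1] ^[l] a m) (N k : ℕ) :
    0 ≤ bernsteinWeight a N k := by
  rw [bernsteinWeight, bernsteinPolynomial, mul_assoc, ← nsmul_eq_mul, map_nsmul,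
    momentFunctional_X_pow_mul_one_sub_X_pow]
  exact nsmul_nonneg (ha _ _) _

lemma sum_descFactorial_mul_bernsteinWeight (N j : ℕ) :
    ∑ k ∈ Finset.range (N + 1), k.descFactorial j * bernsteinWeight a N k =
      N.descFactorial j * a j := by
  have h := congrArg (momentFunctional a) (sum_descFactorial_smul_bernsteinPolynomial ℝ N j)
  rw [map_sum, map_nsmul, momentFunctional_X_pow, nsmul_eq_mul] at h
  simp only [map_nsmul] at h
  simpa only [bernsteinWeight, nsmul_eq_mul] using h

lemma sum_bernsteinWeight (N : ℕ) :
    ∑ k ∈ Finset.range (N + 1), bernsteinWeight a N k = a 0 := by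
  simpa using sum_descFactorial_mul_bernsteinWeight a N 0

end MomentFunctional

lemma abs_div_pow_sub_descFactorial_div_pow_le {k N : ℕ} (hk : k ≤ N) (j : ℕ) :
    |((k : ℝ) / N) ^ j - k.descFactorial j / (N : ℝ) ^ j| ≤ j ^ 2 / N := by
  have hy₀ : 0 ≤ (k : ℝ) / N := by positivity
  have hy₁ : (k : ℝ) / N ≤ 1 := div_le_one_of_le₀ (by exact_mod_cast hk) (by positivity)
  have hle (j : ℕ) : (k.descFactorial j : ℝ) / (N : ℝ) ^ j ≤ (k / N) ^ j := by
    rw [div_pow]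
    gcongr
    exact_mod_cast k.descFactorial_le_pow j
  rw [abs_of_nonneg (sub_nonneg.2 (hle j))]
  induction j with
  | zero => simp
  | succ j ih =>
    have hstep : (k / N - j / N) * (k.descFactorial j / (N : ℝ) ^ j) ≤
        k.descFactorial (j + 1) / (N : ℝ) ^ (j + 1) := by
      rw [Nat.descFactorial_succ, Nat.cast_mul, pow_succ', mul_div_mul_comm, ← sub_div]
      gcongr
      rw [sub_le_iff_le_add]
      exact_mod_cast le_tsub_add
    calc ((k : ℝ) / N) ^ (j + 1) - k.descFactorial (j + 1) / (N : ℝ) ^ (j + 1)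
        ≤ (k / N) ^ (j + 1) - (k / N - j / N) * (k.descFactorial j / (N : ℝ) ^ j) := by gcongr
      _ = k / N * ((k / N) ^ j - k.descFactorial j / (N : ℝ) ^ j) +
          k.descFactorial j / (N : ℝ) ^ j * (j / N) := by ring
      _ ≤ 1 * (j ^ 2 / N) + 1 * (j / N) := by
        gcongr
        · exact sub_nonneg.2 (hle j)
        · exact (hle j).trans (pow_le_one₀ hy₀ hy₁)
      _ = (j ^ 2 + j) / N := by ring
      _ ≤ ((j + 1 : ℕ) : ℝ) ^ 2 / N := by
        gcongr
        push_cast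
        nlinarith [j.cast_nonneg (α := ℝ)]

lemma exists_measure_forall_integral_eq_of_tendsto {X ι κ : Type*} [TopologicalSpace X]
    [CompactSpace X] [T2Space X] [MeasurableSpace X] [BorelSpace X] {l : Filter κ} [l.NeBot]
    {μ : κ → Measure X} [∀ n, IsFiniteMeasure (μ n)] {C : NNReal} (hμ : ∀ n, μ n Set.univ ≤ C)
    {f : ι → C(X, ℝ)} {a : ι → ℝ} (h : ∀ i, Tendsto (fun n => ∫ x, f i x ∂μ n) l (𝓝 (a i))) :
    ∃ ν : Measure X, IsFiniteMeasure ν ∧ ∀ i, ∫ x, f i x ∂ν = a i := by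
  let μ' (n : κ) : FiniteMeasure X := ⟨μ n, inferInstance⟩
  have hmass (n : κ) : (μ' n).mass ≤ C := ENNReal.toNNReal_mono ENNReal.coe_ne_top (hμ n)
  have hcompact := isCompact_setOfPred_finiteMeasure_le_of_compactSpace X C
  obtain ⟨ν, -, hν⟩ := hcompact.ultrafilter_le_nhds ((Ultrafilter.of l).map μ')
    (le_principal_iff.2 (univ_mem' (f := (Ultrafilter.of l : Filter κ)) hmass))
  refine ⟨ν, inferInstance, fun i => ?_⟩
  have hlim := FiniteMeasure.tendsto_iff_forall_integral_tendsto.1 hν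
    (BoundedContinuousFunction.mkOfCompact (f i))
  exact tendsto_nhds_unique hlim ((h i).mono_left (Ultrafilter.of_le l))

/-- Hausdorff's discrete approximation `∑ₖ bernsteinWeight a N k • δ_{k/N}` of a measure on `[0,1]`
with moments `a`. -/
def bernsteinMeasure (a : ℕ → ℝ) (N : ℕ) : Measure unitInterval :=
  ∑ k ∈ Finset.range (N + 1), ENNReal.ofReal (bernsteinWeight a N k) •
    Measure.dirac (Set.projIcc 0 1 zero_le_one (k / N : ℝ))

section BernsteinMeasure

variable {a : ℕ → ℝ} (ha : ∀ m l : ℕ, 0 ≤ (-1) ^ l * Δ_[1] ^[l] a m)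

include ha

lemma bernsteinMeasure_univ (N : ℕ) :
    bernsteinMeasure a N Set.univ = ENNReal.ofReal (a 0) := by
  simp only [bernsteinMeasure, Measure.finsetSum_apply, Measure.smul_apply, measure_univ,
    smul_eq_mul, mul_one]
  rw [← ENNReal.ofReal_sum_of_nonneg fun k _ => bernsteinWeight_nonneg a ha N k,
    sum_bernsteinWeight]

lemma integral_pow_bernsteinMeasure (N j : ℕ) :
    ∫ x, (x : ℝ) ^ j ∂bernsteinMeasure a N =
      ∑ k ∈ Finset.range (N + 1), bernsteinWeight a N k * ((k : ℝ) / N) ^ j := by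
  rw [bernsteinMeasure, integral_finsetSum_measure fun k _ =>
    (integrable_dirac enorm_lt_top).smul_measure ENNReal.ofReal_ne_top]
  refine Finset.sum_congr rfl fun k hk => ?_
  have hk : (k : ℝ) ≤ N := by exact_mod_cast Finset.mem_range_succ_iff.1 hk
  rw [integral_smul_measure, integral_dirac,
    ENNReal.toReal_ofReal (bernsteinWeight_nonneg a ha N k), smul_eq_mul,
    Set.projIcc_of_mem zero_le_one ⟨by positivity, div_le_one_of_le₀ hk (by positivity)⟩]

lemma abs_integral_pow_bernsteinMeasure_sub_le (N j : ℕ) :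
    |∫ x, (x : ℝ) ^ j ∂bernsteinMeasure a N - N.descFactorial j / (N : ℝ) ^ j * a j| ≤
      j ^ 2 / N * a 0 := by
  have hmoment : N.descFactorial j / (N : ℝ) ^ j * a j =
      ∑ k ∈ Finset.range (N + 1), bernsteinWeight a N k * (k.descFactorial j / (N : ℝ) ^ j) := by
    rw [div_mul_eq_mul_div, ← sum_descFactorial_mul_bernsteinWeight, Finset.sum_div]
    exact Finset.sum_congr rfl fun k _ => by ring
  rw [integral_pow_bernsteinMeasure ha, hmoment, ← Finset.sum_sub_distrib, mul_comm,
    ← sum_bernsteinWeight a N, Finset.sum_mul]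
  refine (Finset.abs_sum_le_sum_abs _ _).trans (Finset.sum_le_sum fun k hk => ?_)
  rw [← mul_sub, abs_mul, abs_of_nonneg (bernsteinWeight_nonneg a ha N k)]
  gcongr
  · exact bernsteinWeight_nonneg a ha N k
  · exact abs_div_pow_sub_descFactorial_div_pow_le (Finset.mem_range_succ_iff.1 hk) j

lemma tendsto_integral_pow_bernsteinMeasure (j : ℕ) :
    Tendsto (fun N => ∫ x, (x : ℝ) ^ j ∂bernsteinMeasure a N) atTop (𝓝 (a j)) := by
  have hsmall (c : ℝ) : Tendsto (fun N : ℕ => j ^ 2 / N * c) atTop (𝓝 0) := by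
    simpa using (tendsto_const_div_atTop_nhds_zero_nat ((j : ℝ) ^ 2)).mul_const c
  have hratio : Tendsto (fun N : ℕ => N.descFactorial j / (N : ℝ) ^ j * a j) atTop (𝓝 (a j)) := by
    rw [← tendsto_sub_nhds_zero_iff]
    refine squeeze_zero_norm' ?_ (hsmall |a j|)
    filter_upwards [eventually_gt_atTop 0] with N hN
    have h := abs_div_pow_sub_descFactorial_div_pow_le le_rfl j (N := N)
    rw [div_self (Nat.cast_pos.2 hN).ne', one_pow] at h
    rw [← sub_one_mul, Real.norm_eq_abs, abs_mul, abs_sub_comm]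
    gcongr
  have hdiff : Tendsto (fun N : ℕ => ∫ x, (x : ℝ) ^ j ∂bernsteinMeasure a N -
      N.descFactorial j / (N : ℝ) ^ j * a j) atTop (𝓝 0) :=
    squeeze_zero_norm (abs_integral_pow_bernsteinMeasure_sub_le ha · j) (hsmall (a 0))
  simpa using hdiff.add hratio

theorem exists_measure_unitInterval_integral_pow_eq :
    ∃ ν : Measure unitInterval, IsFiniteMeasure ν ∧ ∀ n : ℕ, ∫ x, (x : ℝ) ^ n ∂ν = a n := by
  have hfin (N : ℕ) : IsFiniteMeasure (bernsteinMeasure a N) :=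
    ⟨by rw [bernsteinMeasure_univ ha]; exact ENNReal.ofReal_lt_top⟩
  exact exists_measure_forall_integral_eq_of_tendsto (l := atTop) (C := (a 0).toNNReal)
    (fun N => (bernsteinMeasure_univ ha N).le)
    (f := fun n => ⟨fun x : unitInterval => (x : ℝ) ^ n, by fun_prop⟩)
    (tendsto_integral_pow_bernsteinMeasure ha)

end BernsteinMeasure

lemma measure_ext_of_dense_integral_eq {X : Type*} [TopologicalSpace X] [CompactSpace X]
    [HasOuterApproxClosed X] [MeasurableSpace X] [BorelSpace X] {μ ν : Measure X}
    [IsFiniteMeasure μ] [IsFiniteMeasure ν] {s : Set C(X, ℝ)} (hs : Dense s)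
    (h : ∀ f ∈ s, ∫ x, f x ∂μ = ∫ x, f x ∂ν) : μ = ν := by
  have hcont (ρ : Measure X) [IsFiniteMeasure ρ] : Continuous fun f : C(X, ℝ) => ∫ x, f x ∂ρ :=
    (continuous_integral.comp (ContinuousMap.toLp (E := ℝ) 1 ρ ℝ).continuous).congr fun f =>
      integral_congr_ae (ContinuousMap.coeFn_toLp (p := 1) (𝕜 := ℝ) ρ f)
  refine ext_of_forall_integral_eq_of_IsFiniteMeasure fun f => ?_
  exact congrFun ((hcont μ).ext_on hs (hcont ν) h) f.toContinuousMap

lemma integrable_of_continuous_of_compactSpace {X : Type*} [TopologicalSpace X] [CompactSpace X]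
    [MeasurableSpace X] [OpensMeasurableSpace X] {μ : Measure X} [IsFiniteMeasureOnCompacts μ]
    {f : X → ℝ} (hf : Continuous f) : Integrable f μ :=
  hf.integrable_of_hasCompactSupport (.of_compactSpace f)

lemma measure_unitInterval_ext_of_moments {μ ν : Measure unitInterval} [IsFiniteMeasure μ]
    [IsFiniteMeasure ν] (h : ∀ n : ℕ, ∫ x, (x : ℝ) ^ n ∂μ = ∫ x, (x : ℝ) ^ n ∂ν) : μ = ν := by
  have hdense : Dense (polynomialFunctions unitInterval : Set C(unitInterval, ℝ)) := by
    rw [dense_iff_closure_eq, ← Subalgebra.topologicalClosure_coe,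
      polynomialFunctions_closure_eq_top', Algebra.coe_top]
  refine measure_ext_of_dense_integral_eq hdense ?_
  rintro _ ⟨p, -, rfl⟩
  have hint (ρ : Measure unitInterval) [IsFiniteMeasure ρ] :
      ∫ x, toContinuousMapOn p unitInterval x ∂ρ =
        ∑ n ∈ Finset.range (p.natDegree + 1), p.coeff n * ∫ x, (x : ℝ) ^ n ∂ρ := by
    simp only [toContinuousMapOn_apply, toContinuousMap_apply, eval_eq_sum_range]
    rw [integral_finsetSum _ fun n _ => integrable_of_continuous_of_compactSpace (by fun_prop)]
    simp only [integral_const_mul]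
  have hμ := hint μ
  simp only [h] at hμ
  exact hμ.trans (hint ν).symm

/-! ### Positive functionals of subexponential growth -/

section PositiveFunctional

variable {A : Type*} [CommRing A] [Algebra ℝ A] {L : A →ₗ[ℝ] ℝ} (hL : ∀ p, 0 ≤ L (p ^ 2))

include hL

lemma map_mul_sq_le_of_map_sq_nonneg (p q : A) : L (p * q) ^ 2 ≤ L (p ^ 2) * L (q ^ 2) := by
  have hquad (x : ℝ) : 0 ≤ L (q ^ 2) * (x * x) + 2 * L (p * q) * x + L (p ^ 2) := by
    have hexpand : (p + x • q) ^ 2 = p ^ 2 + (2 * x) • (p * q) + (x * x) • q ^ 2 := by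
      simp only [Algebra.smul_def, map_mul, map_ofNat]
      ring
    have h := hL (p + x • q)
    simp only [hexpand, map_add, map_smul, smul_eq_mul] at h
    linarith
  have h := discrim_le_zero hquad
  rw [discrim] at h
  linarith

lemma pow_le_map_sq_mul_pow (p u : A) (hp : 0 < L (p ^ 2)) (hu : 0 ≤ L (p ^ 2 * u)) (n : ℕ) :
    L (p ^ 2) * (L (p ^ 2 * u) / L (p ^ 2)) ^ 2 ^ n ≤ L (p ^ 2 * u ^ 2 ^ n) := by
  induction n with
  | zero => simp [mul_div_cancel₀ _ hp.ne']
  | succ n ih =>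
    have hcs := map_mul_sq_le_of_map_sq_nonneg hL p (p * u ^ 2 ^ n)
    rw [← mul_assoc, ← sq, mul_pow, ← pow_mul, ← pow_succ] at hcs
    refine le_of_mul_le_mul_left ?_ hp
    calc L (p ^ 2) * (L (p ^ 2) * (L (p ^ 2 * u) / L (p ^ 2)) ^ 2 ^ (n + 1))
        = (L (p ^ 2) * (L (p ^ 2 * u) / L (p ^ 2)) ^ 2 ^ n) ^ 2 := by ring
      _ ≤ L (p ^ 2 * u ^ 2 ^ n) ^ 2 := by gcongr
      _ ≤ L (p ^ 2) * L (p ^ 2 * u ^ 2 ^ (n + 1)) := hcs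

-- The lower bound `L (p ^ 2 * u ^ N) ≥ L (p ^ 2) * q ^ N` along `N = 2 ^ n`, where
-- `q = L (p ^ 2 * u) / L (p ^ 2)`, is incompatible with subexponential growth unless `q ≤ 1`.
lemma map_sq_mul_le_map_sq_of_subexponential {p u : A}
    (hgrowth : ∀ r > 1, (fun n : ℕ => L (p ^ 2 * u ^ n)) =O[atTop] fun n => (r : ℝ) ^ n) :
    L (p ^ 2 * u) ≤ L (p ^ 2) := by
  by_contra! hlt
  have hu : 0 ≤ L (p ^ 2 * u) := (hL p).trans hlt.le
  have hp : 0 < L (p ^ 2) := by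
    refine (hL p).lt_of_ne fun h0 => ?_
    have hcs := map_mul_sq_le_of_map_sq_nonneg hL p (p * u)
    rw [← h0, zero_mul, ← mul_assoc, ← sq] at hcs
    exact hlt.ne' ((sq_nonpos_iff _).1 hcs |>.trans h0)
  obtain ⟨r, hr₁, hrq⟩ := exists_between ((one_lt_div hp).2 hlt)
  set q := L (p ^ 2 * u) / L (p ^ 2)
  have hlower : (fun n : ℕ => q ^ 2 ^ n) =O[atTop] fun n => L (p ^ 2 * u ^ 2 ^ n) := by
    refine Asymptotics.IsBigO.of_bound (L (p ^ 2))⁻¹ (Eventually.of_forall fun n => ?_)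
    rw [Real.norm_of_nonneg (by positivity), ← div_eq_inv_mul, le_div_iff₀ hp, mul_comm]
    exact (pow_le_map_sq_mul_pow hL p u hp hu n).trans (Real.le_norm_self _)
  have hpow := tendsto_pow_atTop_atTop_of_one_lt (one_lt_two (α := ℕ))
  have hself : (fun n : ℕ => q ^ 2 ^ n) =o[atTop] fun n => q ^ 2 ^ n :=
    (hlower.trans ((hgrowth r hr₁).comp_tendsto hpow)).trans_isLittleO
      ((isLittleO_pow_pow_of_lt_left (by positivity) hrq).comp_tendsto hpow)
  exact Asymptotics.isLittleO_irrefl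
    (Frequently.of_forall fun n => (pow_pos (by linarith) (2 ^ n)).ne') hself

lemma map_sq_mul_one_sub_pow_nonneg {u : A}
    (hgrowth : ∀ p, ∀ r > 1, (fun n : ℕ => L (p * u ^ n)) =O[atTop] fun n => (r : ℝ) ^ n)
    (p : A) (l : ℕ) : 0 ≤ L (p ^ 2 * (1 - u) ^ l) := by
  induction l generalizing L with
  | zero => simpa using hL p
  | succ l ih =>
    have hle (q : A) : L (q ^ 2 * u) ≤ L (q ^ 2) :=
      map_sq_mul_le_map_sq_of_subexponential hL (hgrowth (q ^ 2))
    have h := ih (L := L ∘ₗ LinearMap.mulRight ℝ (1 - u))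
      (fun q => by simpa [mul_sub] using hle q)
      fun q r hr => by simpa [mul_right_comm] using hgrowth (q * (1 - u)) r hr
    simpa [pow_succ, mul_assoc] using h

end PositiveFunctional

lemma momentFunctional_sq_nonneg {a : ℕ → ℝ} (ha : (Matrix.of fun i j => a (i + j)).PosSemidef)
    (p : ℝ[X]) : 0 ≤ momentFunctional a (p ^ 2) := by
  have hexpand : momentFunctional a (p ^ 2) =
      ∑ i ∈ p.support, ∑ j ∈ p.support, p.coeff i * p.coeff j * a (i + j) := by
    conv_lhs => rw [p.as_sum_support, sq, Finset.sum_mul_sum]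
    simp only [map_sum, monomial_mul_monomial, momentFunctional_monomial]
  rw [hexpand]
  refine (ha.2 (Finsupp.onFinset p.support p.coeff fun i => mem_support_iff.2)).trans_eq ?_
  simp [mul_right_comm]

lemma isBigO_momentFunctional_mul_X_pow {a : ℕ → ℝ} {r : ℝ} (ha : a =O[atTop] fun n => r ^ n)
    (p : ℝ[X]) : (fun n => momentFunctional a (p * X ^ n)) =O[atTop] fun n => r ^ n := by
  induction p using Polynomial.induction_on' with
  | add p q hp hq => simpa only [add_mul, map_add] using hp.add hq
  | monomial k c =>
    have hpow : (fun n : ℕ => r ^ (n + k)) =O[atTop] fun n => r ^ n := by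
      simpa only [pow_add, mul_comm (r ^ k)] using
        (Asymptotics.isBigO_refl (fun n => r ^ n) atTop).const_mul_left (r ^ k)
    have h := ((ha.comp_tendsto (tendsto_add_atTop_nat k)).trans hpow).const_mul_left c
    simpa only [X_pow_eq_monomial, monomial_mul_monomial, mul_one, momentFunctional_monomial,
      Function.comp_apply, add_comm k] using h

theorem neg_one_pow_mul_fwdDiff_nonneg_of_posSemidef {a : ℕ → ℝ}
    (ha : (Matrix.of fun i j => a (i + j)).PosSemidef)
    (hgrowth : ∀ r > 1, a =O[atTop] fun n => (r : ℝ) ^ n) (l : ℕ) :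
    0 ≤ (-1) ^ l * Δ_[1] ^[l] a 0 := by
  have h := map_sq_mul_one_sub_pow_nonneg (momentFunctional_sq_nonneg ha)
    (fun p r hr => isBigO_momentFunctional_mul_X_pow (hgrowth r hr) p) (X ^ 0) l
  rwa [← pow_mul, zero_mul, momentFunctional_X_pow_mul_one_sub_X_pow] at h

/-! ### Bernstein's theorem -/

lemma fwdDiff_iter_comp_add_nsmul {M G : Type*} [AddCommMonoid M] [AddCommGroup G] (f : M → G)
    (t δ : M) (l m : ℕ) :
    Δ_[1] ^[l] (fun n : ℕ => f (t + n • δ)) m = Δ_[δ] ^[l] f (t + m • δ) := by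
  induction l generalizing m with
  | zero => rfl
  | succ l ih =>
    simp only [Function.iterate_succ_apply', fwdDiff, ih, succ_nsmul, add_assoc]

lemma integrable_rpow_unitInterval (ν : Measure unitInterval) [IsFiniteMeasure ν] {u : ℝ}
    (hu : 0 ≤ u) : Integrable (fun y : unitInterval => (y : ℝ) ^ u) ν :=
  integrable_of_continuous_of_compactSpace
    ((Real.continuous_rpow_const hu).comp continuous_subtype_val)

/-- Complete monotonicity on `(a, ∞)` in terms of finite differences, with no smoothness assumed. -/
def CompletelyMonotoneOnIoi (a : ℝ) (H : ℝ → ℝ) : Prop :=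
  ∀ t > a, ∀ δ > 0, ∀ l : ℕ, 0 ≤ (-1) ^ l * Δ_[δ] ^[l] H t

namespace CompletelyMonotoneOnIoi

variable {a : ℝ} {H : ℝ → ℝ}

lemma nonneg (hH : CompletelyMonotoneOnIoi a H) {t : ℝ} (ht : a < t) : 0 ≤ H t := by
  simpa using hH t ht 1 one_pos 0

lemma antitoneOn (hH : CompletelyMonotoneOnIoi a H) : AntitoneOn H (Set.Ioi a) := by
  intro s hs t _ hst
  rcases hst.eq_or_lt with rfl | hlt
  · rfl
  · simpa [fwdDiff] using hH s hs (t - s) (sub_pos.2 hlt) 1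

lemma exists_measure_integral_pow_eq (hH : CompletelyMonotoneOnIoi a H) {t δ : ℝ} (ht : a < t)
    (hδ : 0 < δ) : ∃ ν : Measure unitInterval,
      IsFiniteMeasure ν ∧ ∀ n : ℕ, ∫ y, (y : ℝ) ^ n ∂ν = H (t + n * δ) := by
  simp only [← nsmul_eq_mul]
  refine exists_measure_unitInterval_integral_pow_eq fun m l => ?_
  rw [fwdDiff_iter_comp_add_nsmul]
  exact hH _ (ht.trans_le (le_add_of_nonneg_right (nsmul_nonneg hδ.le m))) δ hδ l

lemma integral_rpow_natCast_div (hH : CompletelyMonotoneOnIoi a H) {t : ℝ} (ht : a < t)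
    {ν : Measure unitInterval} [IsFiniteMeasure ν]
    (hν : ∀ n : ℕ, ∫ y, (y : ℝ) ^ n ∂ν = H (t + n)) (n : ℕ) {N : ℕ} (hN : N ≠ 0) :
    ∫ y, (y : ℝ) ^ (n / N : ℝ) ∂ν = H (t + n / N) := by
  have hN' : (N : ℝ) ≠ 0 := Nat.cast_ne_zero.2 hN
  obtain ⟨ρ, _, hρ⟩ := hH.exists_measure_integral_pow_eq ht (δ := (N : ℝ)⁻¹) (by positivity)
  have hpow : Measurable fun y : unitInterval => y ^ N := by fun_prop
  have hmap : ρ.map (fun y => y ^ N) = ν := by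
    refine measure_unitInterval_ext_of_moments fun k => ?_
    rw [integral_map hpow.aemeasurable (by fun_prop), hν, ← mul_inv_cancel_right₀ hN' (k : ℝ),
      ← Nat.cast_mul, ← hρ]
    simp only [Set.Icc.coe_pow, ← pow_mul, mul_comm]
  rw [← hmap, integral_map hpow.aemeasurable
    (integrable_rpow_unitInterval _ (by positivity)).aestronglyMeasurable, div_eq_mul_inv, ← hρ]
  refine integral_congr_ae (ae_of_all _ fun y => ?_)
  simp only [Set.Icc.coe_pow]
  rw [← div_eq_mul_inv, ← Real.rpow_natCast_mul y.2.1, mul_div_cancel₀ _ hN', Real.rpow_natCast]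

end CompletelyMonotoneOnIoi

lemma continuousOn_integral_rpow_unitInterval (ν : Measure unitInterval) [IsFiniteMeasure ν] :
    ContinuousOn (fun u : ℝ => ∫ y : unitInterval, (y : ℝ) ^ u ∂ν) (Set.Ioi 0) := by
  refine continuousOn_of_dominated (bound := fun _ => 1)
    (fun u hu => (integrable_rpow_unitInterval ν hu.le).aestronglyMeasurable)
    (fun u (hu : 0 < u) => ae_of_all _ fun y => ?_) (integrable_const 1)
    (ae_of_all _ fun y u hu => (Real.continuousAt_const_rpow' hu.ne').continuousWithinAt)
  rw [Real.norm_of_nonneg (Real.rpow_nonneg y.2.1 _)]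
  exact Real.rpow_le_one y.2.1 y.2.2 hu.le

lemma eqOn_of_antitoneOn_of_continuousOn_of_dense {f g : ℝ → ℝ} {s D : Set ℝ} (hs : IsOpen s)
    (hf : AntitoneOn f s) (hg : ContinuousOn g s) (hD : Dense D)
    (hfg : ∀ x ∈ s ∩ D, f x = g x) : Set.EqOn f g s := by
  intro u hu
  have hmem : ∀ᶠ x in 𝓝 u, x ∈ s := hs.mem_nhds hu
  have hgu : Tendsto g (𝓝 u) (𝓝 (g u)) := hg.continuousAt (hs.mem_nhds hu)
  have hleft : (𝓝[Set.Iio u ∩ D] u).NeBot := mem_closure_iff_nhdsWithin_neBot.1 <|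
    closure_minimal (hD.open_subset_closure_inter isOpen_Iio) isClosed_closure
      (by rw [closure_Iio]; exact Set.self_mem_Iic)
  have hright : (𝓝[Set.Ioi u ∩ D] u).NeBot := mem_closure_iff_nhdsWithin_neBot.1 <|
    closure_minimal (hD.open_subset_closure_inter isOpen_Ioi) isClosed_closure
      (by rw [closure_Ioi]; exact Set.self_mem_Ici)
  refine le_antisymm ?_ ?_
  · refine ge_of_tendsto (hgu.mono_left (nhdsWithin_le_nhds (s := Set.Iio u ∩ D))) ?_
    filter_upwards [nhdsWithin_le_nhds hmem, self_mem_nhdsWithin] with x hx hxD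
    rw [← hfg x ⟨hx, hxD.2⟩]
    exact hf hx hu hxD.1.le
  · refine le_of_tendsto (hgu.mono_left (nhdsWithin_le_nhds (s := Set.Ioi u ∩ D))) ?_
    filter_upwards [nhdsWithin_le_nhds hmem, self_mem_nhdsWithin] with x hx hxD
    rw [← hfg x ⟨hx, hxD.2⟩]
    exact hf hu hx hxD.1.le

namespace CompletelyMonotoneOnIoi

variable {a : ℝ} {H : ℝ → ℝ}

lemma exists_measure_integral_rpow_eq (hH : CompletelyMonotoneOnIoi a H) {t : ℝ} (ht : a < t) :
    ∃ ν : Measure unitInterval,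
      IsFiniteMeasure ν ∧ ∀ u : ℝ, 0 ≤ u → ∫ y, (y : ℝ) ^ u ∂ν = H (t + u) := by
  obtain ⟨ν, hνfin, hν⟩ := hH.exists_measure_integral_pow_eq ht one_pos
  simp only [mul_one] at hν
  refine ⟨ν, hνfin, fun u hu => ?_⟩
  rcases hu.eq_or_lt with rfl | hu
  · simpa using hν 0
  have hanti : AntitoneOn (fun u => H (t + u)) (Set.Ioi 0) := fun x hx y hy hxy =>
    hH.antitoneOn (ht.trans (lt_add_of_pos_right t hx)) (ht.trans (lt_add_of_pos_right t hy))
      (add_le_add_right hxy t)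
  refine (eqOn_of_antitoneOn_of_continuousOn_of_dense isOpen_Ioi hanti
    (continuousOn_integral_rpow_unitInterval ν) Rat.denseRange_cast ?_ hu).symm
  rintro _ ⟨hq, q, rfl⟩
  lift q to ℚ≥0 using Rat.cast_nonneg.1 (Set.mem_Ioi.1 hq).le
  have h := hH.integral_rpow_natCast_div ht hν q.num q.den_ne_zero
  have hcast : ((q : ℚ) : ℝ) = q.num / q.den := by exact_mod_cast NNRat.cast_def q
  rw [hcast, h]

end CompletelyMonotoneOnIoi

lemma withDensity_rpow_eq_of_integral_rpow_eq {ρ ν : Measure unitInterval} [IsFiniteMeasure ρ]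
    [IsFiniteMeasure ν] {s : ℝ} (hs : 0 ≤ s)
    (h : ∀ n : ℕ, ∫ y, (y : ℝ) ^ (s + n) ∂ρ = ∫ y, (y : ℝ) ^ n ∂ν) :
    ρ.withDensity (fun y => ENNReal.ofReal ((y : ℝ) ^ s)) = ν := by
  have hfin := isFiniteMeasure_withDensity_ofReal (integrable_rpow_unitInterval ρ hs).2
  refine measure_unitInterval_ext_of_moments fun n => ?_
  rw [integral_withDensity_eq_integral_toReal_smul (by fun_prop)
    (ae_of_all _ fun _ => ENNReal.ofReal_lt_top), ← h]
  refine integral_congr_ae (ae_of_all _ fun y => ?_)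
  simp only [ENNReal.toReal_ofReal (Real.rpow_nonneg y.2.1 s), smul_eq_mul,
    Real.rpow_add_of_nonneg y.2.1 hs n.cast_nonneg, Real.rpow_natCast]

lemma rpow_one_sub_mul_inv_mul_exp_mul_log {y s t : ℝ} (hy : 0 ≤ y) (hst : s < t) :
    y ^ (1 - s) * (y⁻¹ * Real.exp (-t * -Real.log y)) = y ^ (t - s) := by
  rcases hy.eq_or_lt with rfl | hy
  · simp [Real.zero_rpow (sub_pos.2 hst).ne']
  · rw [neg_mul_neg, mul_comm t, ← Real.rpow_def_of_pos hy, ← Real.rpow_neg_one,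
      ← Real.rpow_add hy, ← Real.rpow_add hy]
    ring_nf

/-- The image under `y ↦ -log y` of the measure `y⁻¹ dν(y)`, which has Laplace transform
`t ↦ ∫ y ^ (t - 1) dν(y)`. The convention `0⁻¹ = 0` discards an atom of `ν` at `0`. -/
def negLogMeasure (ν : Measure unitInterval) : Measure ℝ :=
  (ν.withDensity fun y => ENNReal.ofReal (y : ℝ)⁻¹).map fun y : unitInterval => -Real.log y

lemma negLogMeasure_Iio_zero (ν : Measure unitInterval) : negLogMeasure ν (Set.Iio 0) = 0 := by
  have hempty : (fun y : unitInterval => -Real.log y) ⁻¹' Set.Iio 0 = ∅ :=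
    Set.eq_empty_of_forall_notMem fun y hy =>
      (neg_nonneg.2 (Real.log_nonpos y.2.1 y.2.2)).not_gt hy
  rw [negLogMeasure, Measure.map_apply (by fun_prop) measurableSet_Iio, hempty, measure_empty]

lemma lintegral_exp_negLogMeasure_withDensity_rpow {ρ : Measure unitInterval} [IsFiniteMeasure ρ]
    {s t : ℝ} (hst : s < t) :
    ∫⁻ l, ENNReal.ofReal (Real.exp (-t * l)) ∂negLogMeasure
        (ρ.withDensity fun y => ENNReal.ofReal ((y : ℝ) ^ (1 - s))) =
      ENNReal.ofReal (∫ y, (y : ℝ) ^ (t - s) ∂ρ) := by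
  rw [negLogMeasure, lintegral_map (by fun_prop) (by fun_prop),
    lintegral_withDensity_eq_lintegral_mul _ (by fun_prop) (by fun_prop),
    lintegral_withDensity_eq_lintegral_mul _ (by fun_prop) (by fun_prop),
    ofReal_integral_eq_lintegral_ofReal (integrable_rpow_unitInterval ρ (sub_pos.2 hst).le)
      (ae_of_all _ fun y => Real.rpow_nonneg y.2.1 _)]
  refine lintegral_congr fun y => ?_
  have hy : (0 : ℝ) ≤ y := y.2.1
  simp only [Pi.mul_apply]
  rw [← ENNReal.ofReal_mul (by positivity), ← ENNReal.ofReal_mul (by positivity),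
    rpow_one_sub_mul_inv_mul_exp_mul_log hy hst]

theorem CompletelyMonotoneOnIoi.exists_measure_lintegral_exp_eq {H : ℝ → ℝ}
    (hH : CompletelyMonotoneOnIoi 0 H) :
    ∃ m : Measure ℝ, SFinite m ∧ m (Set.Iio 0) = 0 ∧
      ∀ t > 0, ∫⁻ l, ENNReal.ofReal (Real.exp (-t * l)) ∂m = ENNReal.ofReal (H t) := by
  obtain ⟨ν, _, hν⟩ := hH.exists_measure_integral_rpow_eq one_pos
  refine ⟨negLogMeasure ν, by unfold negLogMeasure; infer_instance, negLogMeasure_Iio_zero ν,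
    fun t ht => ?_⟩
  obtain ⟨s, hs, hst⟩ := exists_between (lt_min ht one_pos)
  obtain ⟨hst, hs₁⟩ := lt_min_iff.1 hst
  obtain ⟨ρ, _, hρ⟩ := hH.exists_measure_integral_rpow_eq hs
  have hρν : ρ.withDensity (fun y => ENNReal.ofReal ((y : ℝ) ^ (1 - s))) = ν :=
    withDensity_rpow_eq_of_integral_rpow_eq (by linarith) fun n => by
      simp only [← Real.rpow_natCast]
      rw [hρ _ (by linarith [n.cast_nonneg (α := ℝ)]), hν _ n.cast_nonneg]
      ring_nf
  rw [← hρν, lintegral_exp_negLogMeasure_withDensity_rpow hst, hρ _ (sub_pos.2 hst).le,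
    add_sub_cancel]

/-! ### Hankel forms and mollification -/

lemma integrable_mul_of_support_subset {X : Type*} [TopologicalSpace X] [T2Space X]
    [MeasurableSpace X] [OpensMeasurableSpace X] {μ : Measure X} {h g : X → ℝ} {s K : Set X}
    (hh : LocallyIntegrableOn h s μ) (hg : Continuous g) (hK : IsCompact K) (hKs : K ⊆ s)
    (hgK : Function.support g ⊆ K) : Integrable (fun x => h x * g x) μ := by
  refine (integrableOn_iff_integrable_of_support_subset (s := K) fun x hx => hgK ?_).1
    ((hh.integrableOn_compact_subset hKs hK).mul_continuousOn hg.continuousOn hK)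
  exact right_ne_zero_of_mul hx

lemma support_comp_sub_subset_closedBall {ψ : ℝ → ℝ} {r : ℝ}
    (hψ : Function.support ψ ⊆ Metric.closedBall 0 r) (u : ℝ) :
    (Function.support fun x => ψ (x - u)) ⊆ Metric.closedBall u r := fun x hx => by
  simpa [Real.dist_eq] using hψ hx

lemma closedBall_subset_Ioi {a r u : ℝ} (h : a + r < u) : Metric.closedBall u r ⊆ Set.Ioi a := by
  intro x hx
  rw [Real.closedBall_eq_Icc] at hx
  exact (by linarith : a < u - r).trans_le hx.1

/-- The self-convolution `β ⋆ β`, against which `h` is paired by the Hankel form `Q_h[β]`. -/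
def selfConv (β : ℝ → ℝ) : ℝ → ℝ :=
  β ⋆[ContinuousLinearMap.lsmul ℝ ℝ] β

section SelfConv

variable {β : ℝ → ℝ}

lemma selfConv_apply (β : ℝ → ℝ) (x : ℝ) : selfConv β x = ∫ t, β t * β (x - t) :=
  rfl

lemma continuous_selfConv (hβ : Continuous β) (hβc : HasCompactSupport β) :
    Continuous (selfConv β) :=
  hβc.continuous_convolution_right _ hβ.locallyIntegrable hβ

lemma support_selfConv_subset_closedBall {R : ℝ}
    (hβ : Function.support β ⊆ Metric.closedBall 0 R) :
    Function.support (selfConv β) ⊆ Metric.closedBall 0 (2 * R) := by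
  refine (support_convolution_subset _).trans ((Set.add_subset_add hβ hβ).trans ?_)
  rintro _ ⟨x, hx, y, hy, rfl⟩
  rw [mem_closedBall_zero_iff] at hx hy ⊢
  linarith [norm_add_le x y]

lemma integral_selfConv (hβ : Integrable β) : ∫ x, selfConv β x = (∫ x, β x) ^ 2 := by
  rw [selfConv, integral_convolution _ hβ hβ, sq]
  rfl

lemma abs_selfConv_le {M : ℝ} (hβ : Integrable β) (hM : ∀ x, |β x| ≤ M) (x : ℝ) :
    |selfConv β x| ≤ (∫ t, |β t|) * M := by
  rw [selfConv_apply, ← Real.norm_eq_abs, ← integral_mul_const]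
  refine norm_integral_le_of_norm_le (hβ.abs.mul_const M) (ae_of_all _ fun t => ?_)
  rw [Real.norm_eq_abs, abs_mul]
  gcongr
  exact hM _

lemma selfConv_sum_translates {ι : Type*} (hβ : Continuous β) (hβc : HasCompactSupport β)
    (I : Finset ι) (c τ : ι → ℝ) (x : ℝ) :
    selfConv (fun s => ∑ i ∈ I, c i * β (s - τ i)) x =
      ∑ i ∈ I, ∑ j ∈ I, c i * c j * selfConv β (x - (τ i + τ j)) := by
  have hint (i j : ι) : Integrable fun s => c i * c j * (β (s - τ i) * β (x - s - τ j)) := by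
    refine (Continuous.integrable_of_hasCompactSupport (by fun_prop) ?_).const_mul _
    exact (hβc.comp_homeomorph (Homeomorph.subRight (τ i))).mul_right
  have hexpand (s : ℝ) : (∑ i ∈ I, c i * β (s - τ i)) * ∑ i ∈ I, c i * β (x - s - τ i) =
      ∑ i ∈ I, ∑ j ∈ I, c i * c j * (β (s - τ i) * β (x - s - τ j)) := by
    simp only [Finset.sum_mul_sum, mul_mul_mul_comm]
  simp only [selfConv_apply, hexpand]
  rw [integral_finsetSum _ fun i _ => integrable_finsetSum _ fun j _ => hint i j]
  refine Finset.sum_congr rfl fun i _ => ?_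
  rw [integral_finsetSum _ fun j _ => hint i j]
  refine Finset.sum_congr rfl fun j _ => ?_
  rw [integral_const_mul,
    ← integral_sub_right_eq_self (fun s => β s * β (x - (τ i + τ j) - s)) (τ i)]
  congr 2 with s
  ring_nf

end SelfConv

lemma integrable_uncurry_mul_comp_sub_mul {h F : ℝ → ℝ}
    (hloc : LocallyIntegrableOn h (Set.Ioi 0)) (hF : Continuous F) (hFc : HasCompactSupport F)
    (hF₀ : tsupport F ⊆ Set.Ioi 0) :
    Integrable (Function.uncurry fun t x : ℝ => h x * F (x - t) * F t)
      (volume.prod volume) := by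
  have hadd : tsupport F + tsupport F ⊆ Set.Ioi (0 : ℝ) := by
    rintro _ ⟨x, hx, y, hy, rfl⟩
    exact Set.mem_Ioi.2 (add_pos (Set.mem_Ioi.1 (hF₀ hx)) (Set.mem_Ioi.1 (hF₀ hy)))
  have hK : IsCompact (tsupport F + tsupport F) := IsCompact.add hFc.isCompact hFc.isCompact
  have hhK : Integrable ((tsupport F + tsupport F).indicator h) :=
    (hloc.integrableOn_compact_subset hadd hK).integrable_indicator hK.measurableSet
  obtain ⟨C, hC⟩ := hF.bounded_above_of_compact_support hFc
  have hFint : Integrable F := hF.integrable_of_hasCompactSupport hFc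
  have hmul := (hFint.mul_prod hhK).mul_bdd (c := C) (g := fun p : ℝ × ℝ => F (p.2 - p.1))
    (by fun_prop) (ae_of_all _ fun p => hC _)
  refine hmul.congr (ae_of_all _ ?_)
  rintro ⟨t, x⟩
  simp only [Function.uncurry_apply_pair]
  by_cases ht : t ∈ tsupport F
  · by_cases hx : x - t ∈ tsupport F
    · have hxadd : x ∈ tsupport F + tsupport F := ⟨t, ht, x - t, hx, add_sub_cancel t x⟩
      rw [Set.indicator_of_mem hxadd]
      ring
    · simp [image_eq_zero_of_notMem_tsupport hx]
  · simp [image_eq_zero_of_notMem_tsupport ht]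

lemma hankelQF_ofReal_eq_integral_mul_selfConv {h F : ℝ → ℝ}
    (hloc : LocallyIntegrableOn h (Set.Ioi 0)) (hF : IsTestFun fun t => (F t : ℂ)) :
    hankelQF (fun t => (h t : ℂ)) (fun t => (F t : ℂ)) = ∫ x, h x * selfConv F x := by
  have htsupp : tsupport (fun t => (F t : ℂ)) = tsupport F := by simp [tsupport, Function.support]
  have hFc : HasCompactSupport F := by simpa only [HasCompactSupport, htsupp] using hF.2.1
  have hF₀ : tsupport F ⊆ Set.Ioi 0 := by simpa only [htsupp] using hF.2.2
  have hFcont : Continuous F := Complex.continuous_re.comp hF.1.continuous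
  have hzero (x : ℝ) (hx : x ∉ Set.Ioi (0 : ℝ)) : F x = 0 :=
    image_eq_zero_of_notMem_tsupport fun h => hx (hF₀ h)
  have hinner (t : ℝ) : ∫ s in Set.Ioi (0 : ℝ), (h (t + s) : ℂ) * F s * (starRingEnd ℂ) (F t) =
      ∫ x, h x * F (x - t) * F t := by
    rw [setIntegral_eq_integral_of_forall_compl_eq_zero fun s hs => by simp [hzero s hs],
      ← integral_complex_ofReal,
      ← integral_add_left_eq_self (fun x => ((h x * F (x - t) * F t : ℝ) : ℂ)) t]
    simp [Complex.conj_ofReal]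
  rw [hankelQF, setIntegral_eq_integral_of_forall_compl_eq_zero fun t ht => by simp [hzero t ht]]
  simp only [hinner]
  rw [integral_complex_ofReal,
    integral_integral_swap (integrable_uncurry_mul_comp_sub_mul hloc hFcont hFc hF₀)]
  simp only [selfConv_apply, ← integral_const_mul, mul_assoc, mul_comm (F (_ - _))]

/-- The regularisation of `h` by `β ⋆ β`. It is so normalised that
`Q_h[∑ᵢ cᵢ β(· - τᵢ)] = ∑ᵢ ∑ⱼ cᵢ cⱼ hankelMollify h β (τᵢ + τⱼ)`. -/
def hankelMollify (h β : ℝ → ℝ) (u : ℝ) : ℝ :=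
  ∫ x, h x * selfConv β (x - u)

section Positivity

variable {β : ℝ → ℝ} {R : ℝ} {ι : Type*} {I : Finset ι} {c τ : ι → ℝ}

lemma isTestFun_sum_translates (hβ : ContDiff ℝ (⊤ : ℕ∞) β)
    (hβR : Function.support β ⊆ Metric.closedBall 0 R) (hτ : ∀ i ∈ I, R < τ i) :
    IsTestFun fun s => ((∑ i ∈ I, c i * β (s - τ i) : ℝ) : ℂ) := by
  set K : Set ℝ := ⋃ i ∈ I, Metric.closedBall (τ i) R
  have hK : IsCompact K := I.isCompact_biUnion fun i _ => isCompact_closedBall _ _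
  have hK₀ : K ⊆ Set.Ioi 0 :=
    Set.iUnion₂_subset fun i hi => closedBall_subset_Ioi (by simpa using hτ i hi)
  have hsupp : (Function.support fun s => ((∑ i ∈ I, c i * β (s - τ i) : ℝ) : ℂ)) ⊆ K := by
    intro s hs
    obtain ⟨i, hi, hne⟩ := Finset.exists_ne_zero_of_sum_ne_zero (Complex.ofReal_ne_zero.1 hs)
    exact Set.mem_biUnion hi
      (support_comp_sub_subset_closedBall hβR (τ i) (right_ne_zero_of_mul hne))
  have hsmooth : ContDiff ℝ (⊤ : ℕ∞) fun s => ∑ i ∈ I, c i * β (s - τ i) :=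
    ContDiff.sum fun i _ => contDiff_const.mul (hβ.comp (contDiff_id.sub contDiff_const))
  exact ⟨Complex.ofRealCLM.contDiff.comp hsmooth, .of_support_subset_isCompact hK hsupp,
    (closure_minimal hsupp hK.isClosed).trans hK₀⟩

lemma integral_mul_selfConv_sum_translates {h : ℝ → ℝ}
    (hloc : LocallyIntegrableOn h (Set.Ioi 0)) (hβ : Continuous β)
    (hβR : Function.support β ⊆ Metric.closedBall 0 R) (hτ : ∀ i ∈ I, R < τ i) :
    ∫ x, h x * selfConv (fun s => ∑ i ∈ I, c i * β (s - τ i)) x =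
      ∑ i ∈ I, ∑ j ∈ I, c i * c j * hankelMollify h β (τ i + τ j) := by
  have hβc : HasCompactSupport β := .of_support_subset_isCompact (isCompact_closedBall 0 R) hβR
  have hint (i : ι) (hi : i ∈ I) (j : ι) (hj : j ∈ I) :
      Integrable fun x => c i * c j * (h x * selfConv β (x - (τ i + τ j))) :=
    (integrable_mul_of_support_subset hloc
      ((continuous_selfConv hβ hβc).comp (continuous_sub_right _)) (isCompact_closedBall _ _)
      (closedBall_subset_Ioi (by linarith [hτ i hi, hτ j hj]))
      (support_comp_sub_subset_closedBall (support_selfConv_subset_closedBall hβR)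
        _)).const_mul _
  simp only [selfConv_sum_translates hβ hβc, Finset.mul_sum, mul_left_comm (h _)]
  rw [integral_finsetSum _ fun i hi => integrable_finsetSum _ fun j hj => hint i hi j hj]
  refine Finset.sum_congr rfl fun i hi => ?_
  rw [integral_finsetSum _ fun j hj => hint i hi j hj]
  simp only [integral_const_mul, hankelMollify]

lemma posSemidef_hankelMollify {h : ℝ → ℝ} (hloc : LocallyIntegrableOn h (Set.Ioi 0))
    (hpos : ∀ f : ℝ → ℂ, IsTestFun f → 0 ≤ hankelQF (fun t : ℝ => (h t : ℂ)) f)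
    (hβ : ContDiff ℝ (⊤ : ℕ∞) β) (hβR : Function.support β ⊆ Metric.closedBall 0 R)
    (hτ : ∀ i, R < τ i) :
    (Matrix.of fun i j => hankelMollify h β (τ i + τ j)).PosSemidef := by
  refine ⟨by ext i j; simp [add_comm], fun c => ?_⟩
  have htest := isTestFun_sum_translates (I := c.support) (c := c) hβ hβR fun i _ => hτ i
  have hQ := hpos _ htest
  rw [hankelQF_ofReal_eq_integral_mul_selfConv hloc htest, Complex.zero_le_real,
    integral_mul_selfConv_sum_translates hloc hβ.continuous hβR fun i _ => hτ i] at hQ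
  simpa [Finsupp.sum, mul_right_comm] using hQ

end Positivity

lemma isBigO_integral_mul_comp_sub {h ψ : ℝ → ℝ} {r M ε : ℝ} (hε : 0 ≤ ε)
    (hh : IntegrableAtFilter (fun x => Real.exp (-ε * x) * h x) atTop)
    (hψ : Function.support ψ ⊆ Metric.closedBall 0 r) (hM : ∀ x, |ψ x| ≤ M) :
    (fun u => ∫ x, h x * ψ (x - u)) =O[atTop] fun u => Real.exp (ε * u) := by
  obtain ⟨a, ha⟩ := integrableAtFilter_atTop_iff.1 hh
  replace ha := ha.mono_set Set.Ioi_subset_Ici_self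
  refine .of_bound ((∫ x in Set.Ioi a, ‖Real.exp (-ε * x) * h x‖) * (Real.exp (ε * r) * M)) ?_
  filter_upwards [eventually_gt_atTop (a + r)] with u hu
  rw [Real.norm_of_nonneg (Real.exp_pos _).le, mul_assoc, ← integral_mul_const,
    ← integral_indicator measurableSet_Ioi]
  refine norm_integral_le_of_norm_le
    (IntegrableOn.integrable_indicator (ha.norm.mul_const _) measurableSet_Ioi)
    (ae_of_all _ fun x => ?_)
  have hM₀ : 0 ≤ M := (abs_nonneg _).trans (hM 0)
  by_cases hx : ψ (x - u) = 0
  · rw [hx, mul_zero, norm_zero]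
    exact Set.indicator_nonneg (fun x _ => by positivity) x
  have hxball := support_comp_sub_subset_closedBall hψ u hx
  rw [Set.indicator_of_mem (closedBall_subset_Ioi hu hxball)]
  have hexp : 1 ≤ Real.exp (-ε * x) * (Real.exp (ε * r) * Real.exp (ε * u)) := by
    rw [Real.closedBall_eq_Icc] at hxball
    rw [← Real.exp_add, ← Real.exp_add, Real.one_le_exp_iff]
    nlinarith [hxball.2]
  calc ‖h x * ψ (x - u)‖ ≤ ‖h x‖ * M := by
        rw [norm_mul]
        exact mul_le_mul_of_nonneg_left (hM _) (norm_nonneg _)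
    _ ≤ ‖h x‖ * M * (Real.exp (-ε * x) * (Real.exp (ε * r) * Real.exp (ε * u))) :=
        le_mul_of_one_le_right (by positivity) hexp
    _ = _ := by
        rw [norm_mul, Real.norm_of_nonneg (Real.exp_pos _).le]
        ring

lemma isBigO_pow_comp_add_nsmul {f : ℝ → ℝ} {r δ : ℝ} (hr : 0 < r) (hδ : 0 < δ) (t : ℝ)
    (hf : f =O[atTop] fun u => Real.exp (Real.log r / δ * u)) :
    (fun n : ℕ => f (t + n • δ)) =O[atTop] fun n => r ^ n := by
  have htop : Tendsto (fun n : ℕ => t + n • δ) atTop atTop :=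
    tendsto_atTop_add_const_left _ _ (tendsto_id.atTop_nsmul_const hδ)
  have hexp (n : ℕ) : Real.exp (Real.log r / δ * (t + n • δ)) =
      Real.exp (Real.log r / δ * t) * r ^ n := by
    have hn : Real.log r / δ * (n • δ) = n * Real.log r := by
      rw [nsmul_eq_mul]
      field_simp
    rw [mul_add, hn, Real.exp_add, Real.exp_nat_mul, Real.exp_log hr]
  have hcomp := hf.comp_tendsto htop
  simp only [Function.comp_def, hexp] at hcomp
  exact hcomp.trans (Asymptotics.isBigO_const_mul_self _ _ _)

theorem completelyMonotoneOnIoi_hankelMollify {h β : ℝ → ℝ} {R : ℝ}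
    (hloc : LocallyIntegrableOn h (Set.Ioi 0))
    (hexp : ∀ ε > 0, IntegrableAtFilter (fun x => Real.exp (-ε * x) * h x) atTop)
    (hpos : ∀ f : ℝ → ℂ, IsTestFun f → 0 ≤ hankelQF (fun t : ℝ => (h t : ℂ)) f)
    (hβ : ContDiff ℝ (⊤ : ℕ∞) β) (hβR : Function.support β ⊆ Metric.closedBall 0 R) :
    CompletelyMonotoneOnIoi (2 * R) (hankelMollify h β) := by
  intro t ht δ hδ l
  have hβc : HasCompactSupport β := .of_support_subset_isCompact (isCompact_closedBall 0 R) hβR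
  have hβint : Integrable β := hβ.continuous.integrable_of_hasCompactSupport hβc
  obtain ⟨M, hM⟩ := hβ.continuous.bounded_above_of_compact_support hβc
  have hpsd : (Matrix.of fun i j : ℕ => hankelMollify h β (t + (i + j) • δ)).PosSemidef := by
    convert posSemidef_hankelMollify (τ := fun i : ℕ => t / 2 + i * δ) hloc hpos hβ hβR
      fun i => ?_ using 5 with i j
    · rw [nsmul_eq_mul]
      push_cast
      ring
    · nlinarith [i.cast_nonneg (α := ℝ)]
  have hgrowth (r : ℝ) (hr : 1 < r) :
      (fun n : ℕ => hankelMollify h β (t + n • δ)) =O[atTop] fun n => r ^ n := by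
    have hε : 0 < Real.log r / δ := div_pos (Real.log_pos hr) hδ
    exact isBigO_pow_comp_add_nsmul (zero_lt_one.trans hr) hδ t <|
      isBigO_integral_mul_comp_sub hε.le (hexp _ hε) (support_selfConv_subset_closedBall hβR)
        (abs_selfConv_le hβint hM)
  have h := neg_one_pow_mul_fwdDiff_nonneg_of_posSemidef hpsd hgrowth l
  rwa [fwdDiff_iter_comp_add_nsmul, zero_smul, add_zero] at h

/-! ### Limits of mollifications -/

section LebesguePoints

variable {ι : Type*} {l : Filter ι} {h : ℝ → ℝ} {ψ : ι → ℝ → ℝ} {r : ι → ℝ} {K : ℝ}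

lemma ae_tendsto_integral_mul_comp_sub (hh : LocallyIntegrable h) (hr : Tendsto r l (𝓝[>] 0))
    (hψ : ∀ i, ∫ x, ψ i x = 1)
    (hsupp : ∀ i, Function.support (ψ i) ⊆ Metric.closedBall 0 (r i))
    (hbound : ∀ i x, |ψ i x| ≤ K / volume.real (Metric.closedBall (0 : ℝ) (r i))) :
    ∀ᵐ u, Tendsto (fun i => ∫ x, h x * ψ i (x - u)) l (𝓝 (h u)) := by
  have hr₀ : ∀ᶠ i in l, 0 ≤ r i := (tendsto_nhdsWithin_iff.1 hr).2.mono fun i hi => le_of_lt hi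
  filter_upwards [IsUnifLocDoublingMeasure.ae_tendsto_average_norm_sub (μ := volume) hh 1]
    with u hu
  have havg := hu (fun _ => u) r hr
    (hr₀.mono fun i hi => Metric.mem_closedBall_self (by simpa using hi))
  simp only [mul_comm (h _)]
  refine tendsto_integral_smul_of_tendsto_average_norm_sub K havg
    (.of_forall fun i => hh.integrableOn_isCompact (isCompact_closedBall _ _))
    (tendsto_const_nhds.congr fun i => ?_)
    (.of_forall fun i => support_comp_sub_subset_closedBall (hsupp i) u)
    (hr₀.mono fun i hi x => (hbound i _).trans_eq ?_)
  · rw [integral_sub_right_eq_self (ψ i) u, hψ]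
  · simp only [Real.volume_real_closedBall hi]

lemma integral_mul_comp_sub_eventuallyEq {g : ℝ → ℝ} {s : Set ℝ} {u : ℝ} (hs : s ∈ 𝓝 u)
    (hgh : Set.EqOn g h s) (hr : Tendsto r l (𝓝 0))
    (hsupp : ∀ i, Function.support (ψ i) ⊆ Metric.closedBall 0 (r i)) :
    (fun i => ∫ x, g x * ψ i (x - u)) =ᶠ[l] fun i => ∫ x, h x * ψ i (x - u) := by
  obtain ⟨ρ, hρ, hball⟩ := Metric.nhds_basis_closedBall.mem_iff.1 hs
  filter_upwards [hr.eventually_lt_const hρ] with i hi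
  refine integral_congr_ae (ae_of_all _ fun x => ?_)
  by_cases hx : ψ i (x - u) = 0
  · simp [hx]
  have hxu := support_comp_sub_subset_closedBall (hsupp i) u hx
  simp only [hgh (hball (Metric.closedBall_subset_closedBall hi.le hxu))]

lemma ae_restrict_tendsto_integral_mul_comp_sub {U : Set ℝ} (hU : IsOpen U)
    (hh : LocallyIntegrableOn h U) (hr : Tendsto r l (𝓝[>] 0)) (hψ : ∀ i, ∫ x, ψ i x = 1)
    (hsupp : ∀ i, Function.support (ψ i) ⊆ Metric.closedBall 0 (r i))
    (hbound : ∀ i x, |ψ i x| ≤ K / volume.real (Metric.closedBall (0 : ℝ) (r i))) :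
    ∀ᵐ u ∂volume.restrict U, Tendsto (fun i => ∫ x, h x * ψ i (x - u)) l (𝓝 (h u)) := by
  rw [ae_restrict_iff' hU.measurableSet, ae_iff]
  refine measure_null_of_locally_null _ fun v hv => ?_
  have hvU : v ∈ U := (Classical.not_imp.1 hv).1
  obtain ⟨ρ, hρ, hball⟩ := Metric.nhds_basis_closedBall.mem_iff.1 (hU.mem_nhds hvU)
  set g := (Metric.closedBall v ρ).indicator h
  have hg : Integrable g :=
    (hh.integrableOn_compact_subset hball (isCompact_closedBall v ρ)).integrable_indicator
      measurableSet_closedBall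
  have hae := ae_tendsto_integral_mul_comp_sub hg.locallyIntegrable hr hψ hsupp hbound
  refine ⟨_, inter_mem self_mem_nhdsWithin
    (nhdsWithin_le_nhds (Metric.ball_mem_nhds v hρ)), measure_mono_null ?_ hae⟩
  rintro u ⟨hu, huball⟩ (hlim : Tendsto _ l (𝓝 (g u)))
  have hgh : Set.EqOn g h (Metric.ball v ρ) := fun x hx =>
    Set.indicator_of_mem (Metric.ball_subset_closedBall hx) h
  rw [hgh huball] at hlim
  exact hu fun _ => hlim.congr' <|
    integral_mul_comp_sub_eventuallyEq (Metric.isOpen_ball.mem_nhds huball) hgh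
      (tendsto_nhds_of_tendsto_nhdsWithin hr) hsupp

end LebesguePoints

lemma ae_restrict_tendsto_hankelMollify_normed {ι : Type*} {l : Filter ι} {h : ℝ → ℝ}
    {φ : ι → ContDiffBump (0 : ℝ)} {K : ℝ} {U : Set ℝ} (hU : IsOpen U)
    (hh : LocallyIntegrableOn h U) (hφ : Tendsto (fun i => (φ i).rOut) l (𝓝 0))
    (hK : ∀ i, (φ i).rOut ≤ K * (φ i).rIn) :
    ∀ᵐ u ∂volume.restrict U,
      Tendsto (fun i => hankelMollify h ((φ i).normed volume) u) l (𝓝 (h u)) := by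
  have hr : Tendsto (fun i => 2 * (φ i).rOut) l (𝓝[>] 0) :=
    tendsto_nhdsWithin_iff.2 ⟨by simpa using hφ.const_mul 2,
      .of_forall fun i => mul_pos two_pos (φ i).rOut_pos⟩
  refine ae_restrict_tendsto_integral_mul_comp_sub (K := 2 * K) hU hh hr (fun i => ?_)
    (fun i => ?_) fun i x => ?_
  · rw [integral_selfConv (φ i).integrable_normed, (φ i).integral_normed, one_pow]
  · refine support_selfConv_subset_closedBall ?_
    rw [(φ i).support_normed_eq]
    exact Metric.ball_subset_closedBall
  have hnonneg := (φ i).nonneg_normed (μ := volume)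
  have hbound (y : ℝ) :
      |(φ i).normed volume y| ≤ K / volume.real (Metric.closedBall (0 : ℝ) (φ i).rOut) := by
    rw [abs_of_nonneg (hnonneg y)]
    simpa using (φ i).normed_le_div_measure_closedBall_rOut volume K (hK i) y
  refine (abs_selfConv_le (φ i).integrable_normed hbound x).trans_eq ?_
  have hpos := (φ i).rOut_pos
  simp only [abs_of_nonneg (hnonneg _), (φ i).integral_normed, one_mul,
    Real.volume_real_closedBall hpos.le, Real.volume_real_closedBall (mul_pos two_pos hpos).le]
  field_simp

namespace CompletelyMonotoneOnIoi

variable {ι : Type*} {l : Filter ι} {G : ι → ℝ → ℝ} {a : ι → ℝ} {b : ℝ}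

lemma of_tendsto [l.NeBot] {H : ℝ → ℝ} (hG : ∀ i, CompletelyMonotoneOnIoi (a i) (G i))
    (ha : Tendsto a l (𝓝 b)) (hlim : ∀ t > b, Tendsto (fun i => G i t) l (𝓝 (H t))) :
    CompletelyMonotoneOnIoi b H := by
  intro t ht δ hδ n
  have hdiff : Tendsto (fun i => (-1) ^ n * Δ_[δ] ^[n] (G i) t) l
      (𝓝 ((-1) ^ n * Δ_[δ] ^[n] H t)) := by
    simp only [fwdDiff_iter_eq_sum_shift]
    exact (tendsto_finsetSum _ fun k _ => (hlim (t + k • δ)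
      (ht.trans_le (le_add_of_nonneg_right (nsmul_nonneg hδ.le k)))).const_smul _).const_mul _
  exact ge_of_tendsto hdiff ((ha.eventually_lt_const ht).mono fun i hi => hG i t hi δ hδ n)

lemma eventually_mem_Icc {s t y : ℝ} (hG : ∀ i, CompletelyMonotoneOnIoi (a i) (G i))
    (ha : Tendsto a l (𝓝 b)) (hs : b < s) (hst : s ≤ t)
    (hlim : Tendsto (fun i => G i s) l (𝓝 y)) : ∀ᶠ i in l, G i t ∈ Set.Icc 0 (y + 1) := by
  filter_upwards [ha.eventually_lt_const hs, hlim.eventually_le_const (lt_add_one y)] with i hi hy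
  exact ⟨(hG i).nonneg (hi.trans_le hst), ((hG i).antitoneOn hi (hi.trans_le hst) hst).trans hy⟩

lemma exists_ae_eq_of_tendsto [l.NeBot] {h : ℝ → ℝ}
    (hG : ∀ i, CompletelyMonotoneOnIoi (a i) (G i)) (ha : Tendsto a l (𝓝 b))
    (hlim : ∀ᵐ t ∂volume.restrict (Set.Ioi b), Tendsto (fun i => G i t) l (𝓝 (h t))) :
    ∃ H, CompletelyMonotoneOnIoi b H ∧ h =ᵐ[volume.restrict (Set.Ioi b)] H := by
  have hcluster (t : ℝ) (ht : b < t) : ∃ L, Tendsto (fun i => G i t) (Ultrafilter.of l) (𝓝 L) := by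
    obtain ⟨s, hs, hst⟩ : ∃ s ∈ Set.Ioo b t, Tendsto (fun i => G i s) l (𝓝 (h s)) := by
      have hfreq : ∃ᵐ s, s ∈ Set.Ioo b t := by
        rw [frequently_ae_mem_iff, Real.volume_Ioo]
        simpa using ht
      obtain ⟨s, hs, hst⟩ :=
        (hfreq.and_eventually ((ae_restrict_iff' measurableSet_Ioi).1 hlim)).exists
      exact ⟨s, hs, hst hs.1⟩
    have hmem := (eventually_mem_Icc hG ha hs.1 hs.2.le hst).filter_mono (Ultrafilter.of_le l)
    obtain ⟨L, -, hL⟩ := isCompact_Icc.ultrafilter_le_nhds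
      ((Ultrafilter.of l).map fun i => G i t) (le_principal_iff.2 hmem)
    exact ⟨L, hL⟩
  choose! H hH using hcluster
  refine ⟨H, of_tendsto hG (ha.mono_left (Ultrafilter.of_le l)) hH, ?_⟩
  filter_upwards [ae_restrict_mem measurableSet_Ioi, hlim] with t ht hlim_t
  exact tendsto_nhds_unique (hlim_t.mono_left (Ultrafilter.of_le l)) (hH t ht)

end CompletelyMonotoneOnIoi

theorem exists_completelyMonotoneOnIoi_ae_eq {h : ℝ → ℝ}
    (hloc : LocallyIntegrableOn h (Set.Ioi 0))
    (hexp : ∀ ε > 0, IntegrableAtFilter (fun x => Real.exp (-ε * x) * h x) atTop)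
    (hpos : ∀ f : ℝ → ℂ, IsTestFun f → 0 ≤ hankelQF (fun t : ℝ => (h t : ℂ)) f) :
    ∃ H, CompletelyMonotoneOnIoi 0 H ∧ h =ᵐ[volume.restrict (Set.Ioi 0)] H := by
  let φ (n : ℕ) : ContDiffBump (0 : ℝ) :=
    ⟨1 / (n + 1) / 2, 1 / (n + 1), by positivity, half_lt_self (by positivity)⟩
  have hφ : Tendsto (fun n => (φ n).rOut) atTop (𝓝 0) := tendsto_one_div_add_atTop_nhds_zero_nat
  refine CompletelyMonotoneOnIoi.exists_ae_eq_of_tendsto (fun n =>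
    completelyMonotoneOnIoi_hankelMollify hloc hexp hpos (φ n).contDiff_normed
      ((φ n).support_normed_eq.trans_subset Metric.ball_subset_closedBall))
    (by simpa using hφ.const_mul 2)
    (ae_restrict_tendsto_hankelMollify_normed (K := 2) isOpen_Ioi hloc hφ fun n => ?_)
  exact (mul_div_cancel₀ _ two_ne_zero).ge

/-! ### The logarithmic weight -/

lemma isLittleO_one_add_abs_log_rpow (κ : ℝ) {b : ℝ} (hb : 0 < b) :
    (fun x => (1 + |Real.log x|) ^ κ) =o[atTop] fun x => x ^ b := by
  have h := (isLittleO_log_rpow_rpow_atTop κ hb).comp_tendsto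
    (tendsto_id.const_mul_atTop (Real.exp_pos 1))
  refine (h.congr' ?_ ?_).trans_isBigO
    (Asymptotics.isBigO_const_mul_self (Real.exp 1 ^ b) (fun x : ℝ => x ^ b) atTop)
  · filter_upwards [eventually_ge_atTop 1] with x hx
    rw [Function.comp_apply, id, Real.log_mul (Real.exp_pos 1).ne' (by positivity), Real.log_exp,
      abs_of_nonneg (Real.log_nonneg hx)]
  · filter_upwards [eventually_ge_atTop 0] with x hx
    rw [Function.comp_apply, id, Real.mul_rpow (Real.exp_pos 1).le hx]

lemma isBigO_inv_one_add_abs_log_rpow (κ : ℝ) :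
    (fun x => x⁻¹) =O[atTop] fun x => (1 + |Real.log x|) ^ (-κ) := by
  have h := (isLittleO_one_add_abs_log_rpow κ one_pos).isBigO.inv_rev
    (.of_forall fun x hx => absurd hx (by positivity))
  refine h.congr (fun x => by rw [Real.rpow_one]) fun x => ?_
  rw [Real.rpow_neg (by positivity)]

lemma isBigO_exp_neg_one_add_abs_log_rpow (κ : ℝ) {ε : ℝ} (hε : 0 < ε) :
    (fun x => Real.exp (-ε * x)) =O[atTop] fun x => (1 + |Real.log x|) ^ (-κ) :=
  ((isLittleO_exp_neg_mul_rpow_atTop hε (-1)).isBigO.congr_right Real.rpow_neg_one).trans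
    (isBigO_inv_one_add_abs_log_rpow κ)

lemma integrableAtFilter_exp_neg_mul {h : ℝ → ℝ} {κ ε : ℝ} (hε : 0 < ε)
    (hh : AEStronglyMeasurable h (volume.restrict (Set.Ioi 0)))
    (hκ : IntegrableOn (fun t => |h t| * (1 + |Real.log t|) ^ (-κ)) (Set.Ioi 0)) :
    IntegrableAtFilter (fun x => Real.exp (-ε * x) * h x) atTop := by
  have hbound : (fun x => Real.exp (-ε * x) * h x) =O[atTop]
      fun x => |h x| * (1 + |Real.log x|) ^ (-κ) := by
    simp only [mul_comm |h _|]
    exact (isBigO_exp_neg_one_add_abs_log_rpow κ hε).mul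
      (Asymptotics.isBigO_refl h atTop).norm_right
  exact hbound.integrableAtFilter
    ⟨_, Ioi_mem_atTop 0, (Continuous.aestronglyMeasurable (by fun_prop)).mul hh⟩
    ⟨_, Ioi_mem_atTop 0, hκ⟩

lemma rpow_neg_abs_mul_rpow_le_rpow {c x y : ℝ} (hc : 0 < c) (hx : 0 < x) (hxy : x ≤ c * y)
    (hyx : y ≤ c * x) (p : ℝ) : c ^ (-|p|) * x ^ p ≤ y ^ p := by
  have hy : 0 < y := pos_of_mul_pos_right (hx.trans_le hxy) hc.le
  rcases le_total 0 p with hp | hp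
  · rw [abs_of_nonneg hp, Real.rpow_neg hc.le, inv_mul_le_iff₀ (by positivity),
      ← Real.mul_rpow hc.le hy.le]
    exact Real.rpow_le_rpow hx.le hxy hp
  · rw [abs_of_nonpos hp, neg_neg, ← Real.mul_rpow hc.le hx.le]
    exact Real.rpow_le_rpow_of_nonpos hy hyx hp

lemma abs_log_sub_log_le_one {s t : ℝ} (hs : 0 < s) (ht : t ∈ Set.Icc s (2 * s)) :
    |Real.log t - Real.log s| ≤ 1 := by
  have hlower := Real.log_le_log hs ht.1
  have hupper := Real.log_le_log (hs.trans_le ht.1) ht.2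
  rw [Real.log_mul two_ne_zero hs.ne'] at hupper
  rw [abs_of_nonneg (sub_nonneg.2 hlower)]
  linarith [Real.log_two_lt_d9]

/-- The Laplace transform `∫₀^∞ e^{-tl} (1 + |ln t|)^{-κ} dt` of the logarithmic weight. -/
def logWeightLaplace (κ l : ℝ) : ENNReal :=
  ∫⁻ t in Set.Ioi (0 : ℝ),
    ENNReal.ofReal (Real.exp (-t * l)) * ENNReal.ofReal ((1 + |Real.log t|) ^ (-κ))

lemma measurable_logWeightLaplace (κ : ℝ) : Measurable (logWeightLaplace κ) :=
  Measurable.lintegral_prod_right (by fun_prop)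

lemma logWeightLaplace_zero (κ : ℝ) : logWeightLaplace κ 0 = ⊤ := by
  by_contra hne
  have hmeas : Measurable fun t : ℝ => (1 + |Real.log t|) ^ (-κ) := by fun_prop
  have hint : IntegrableOn (fun t : ℝ => (1 + |Real.log t|) ^ (-κ)) (Set.Ioi 0) := by
    refine ⟨hmeas.aestronglyMeasurable, ?_⟩
    rw [hasFiniteIntegral_iff_ofReal (ae_of_all _ fun t => by positivity), lt_top_iff_ne_top]
    simpa [logWeightLaplace] using hne
  obtain ⟨a, ha⟩ := integrableAtFilter_atTop_iff.1 <|
    (isBigO_inv_one_add_abs_log_rpow κ).integrableAtFilter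
      (measurable_inv.stronglyMeasurable.stronglyMeasurableAtFilter) ⟨_, Ioi_mem_atTop 0, hint⟩
  exact not_integrableOn_Ioi_inv (ha.mono_set Set.Ioi_subset_Ici_self)

lemma mul_le_logWeightLaplace (κ : ℝ) {l : ℝ} (hl : 0 < l) :
    ENNReal.ofReal (Real.exp (-2) * 2 ^ (-|-κ|)) *
      ENNReal.ofReal ((1 + |Real.log l|) ^ (-κ) * l⁻¹) ≤ logWeightLaplace κ l := by
  have hli : 0 < l⁻¹ := inv_pos.2 hl
  have hlower (t : ℝ) (ht : t ∈ Set.Icc l⁻¹ (2 * l⁻¹)) :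
      ENNReal.ofReal (Real.exp (-2) * (2 ^ (-|-κ|) * (1 + |Real.log l|) ^ (-κ))) ≤
        ENNReal.ofReal (Real.exp (-t * l)) * ENNReal.ofReal ((1 + |Real.log t|) ^ (-κ)) := by
    rw [← ENNReal.ofReal_mul (Real.exp_pos _).le]
    have hexp : Real.exp (-2) ≤ Real.exp (-t * l) := by
      rw [Real.exp_le_exp, neg_mul, neg_le_neg_iff, ← le_div_iff₀ hl]
      exact ht.2
    have hlog := abs_le.1 <|
      (abs_abs_sub_abs_le_abs_sub _ _).trans (abs_log_sub_log_le_one hli ht)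
    rw [Real.log_inv, abs_neg] at hlog
    gcongr
    exact rpow_neg_abs_mul_rpow_le_rpow two_pos (by positivity)
      (by linarith [abs_nonneg (Real.log t)]) (by linarith [abs_nonneg (Real.log l)]) _
  calc _ = ∫⁻ t in Set.Icc l⁻¹ (2 * l⁻¹),
        ENNReal.ofReal (Real.exp (-2) * (2 ^ (-|-κ|) * (1 + |Real.log l|) ^ (-κ))) := by
        rw [setLIntegral_const, Real.volume_Icc, ← ENNReal.ofReal_mul (by positivity),
          ← ENNReal.ofReal_mul (by positivity)]
        ring_nf
    _ ≤ _ := setLIntegral_mono' measurableSet_Icc hlower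
    _ ≤ logWeightLaplace κ l := lintegral_mono_set fun t ht => hli.trans_le ht.1

lemma lintegral_logWeightLaplace {κ : ℝ} {H : ℝ → ℝ} {m : Measure ℝ} [SFinite m]
    (hm : ∀ t > 0, ∫⁻ l, ENNReal.ofReal (Real.exp (-t * l)) ∂m = ENNReal.ofReal (H t)) :
    ∫⁻ l, logWeightLaplace κ l ∂m =
      ∫⁻ t in Set.Ioi (0 : ℝ), ENNReal.ofReal (H t) *
        ENNReal.ofReal ((1 + |Real.log t|) ^ (-κ)) := by
  simp only [logWeightLaplace]
  rw [lintegral_lintegral_swap (Measurable.aemeasurable (by fun_prop))]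
  refine setLIntegral_congr_fun measurableSet_Ioi fun t ht => ?_
  rw [lintegral_mul_const _ (by fun_prop), hm t ht]

lemma measure_singleton_zero_of_lintegral_logWeightLaplace_lt_top {κ : ℝ} {m : Measure ℝ}
    (hm : ∫⁻ l, logWeightLaplace κ l ∂m < ⊤) : m {0} = 0 :=
  measure_mono_null (by simp [logWeightLaplace_zero])
    (ae_iff.1 (ae_lt_top (measurable_logWeightLaplace κ) hm.ne))

lemma setLIntegral_log_weight_lt_top_of_lintegral_logWeightLaplace_lt_top {κ : ℝ}
    {m : Measure ℝ} (hm : ∫⁻ l, logWeightLaplace κ l ∂m < ⊤) :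
    ∫⁻ l in Set.Ioi (0 : ℝ), ENNReal.ofReal ((1 + |Real.log l|) ^ (-κ) * l⁻¹) ∂m < ⊤ := by
  have hc : ENNReal.ofReal (Real.exp (-2) * 2 ^ (-|-κ|)) ≠ 0 :=
    (ENNReal.ofReal_pos.2 (by positivity)).ne'
  refine ENNReal.lt_top_of_mul_ne_top_right (ne_top_of_le_ne_top hm.ne ?_) hc
  rw [← lintegral_const_mul' _ _ ENNReal.ofReal_ne_top]
  exact (setLIntegral_mono' measurableSet_Ioi fun l hl => mul_le_logWeightLaplace κ hl).trans
    (setLIntegral_le_lintegral _ _)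

lemma setIntegral_Ioi_exp_eq_of_lintegral_eq {m : Measure ℝ} (hm : m (Set.Iic 0) = 0) {t y : ℝ}
    (hy : 0 ≤ y) (h : ∫⁻ l, ENNReal.ofReal (Real.exp (-t * l)) ∂m = ENNReal.ofReal y) :
    ∫ l in Set.Ioi (0 : ℝ), Real.exp (-t * l) ∂m = y := by
  have hrestrict : m.restrict (Set.Ioi 0) = m :=
    Measure.restrict_eq_self_of_ae_mem (measure_mono_null (fun _ hl => Set.notMem_Ioi.1 hl) hm)
  rw [hrestrict, integral_eq_lintegral_of_nonneg_ae (ae_of_all _ fun l => (Real.exp_pos _).le)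
    (Continuous.aestronglyMeasurable (by fun_prop)), h, ENNReal.toReal_ofReal hy]

/-- If a real kernel `h` with `∫₀^∞ |h(t)|(1+|ln t|)^{-κ} dt < ∞` has a positive Hankel
form, then `h` is a.e. the Laplace transform of a positive measure `m` on `(0,∞)` with
`∫₀^∞ (1+|ln λ|)^{-ϰ} λ⁻¹ dm(λ) < ∞` for some `ϰ`. -/
theorem positive_hankel_laplace_representation (h : ℝ → ℝ)
    (hloc : LocallyIntegrableOn h (Set.Ioi 0))
    (hκ : ∃ κ : ℝ, IntegrableOn
      (fun t : ℝ => |h t| * (1 + |Real.log t|) ^ (-κ)) (Set.Ioi 0))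
    (hpos : ∀ f : ℝ → ℂ, IsTestFun f → 0 ≤ hankelQF (fun t : ℝ => ((h t : ℝ) : ℂ)) f) :
    ∃ m : Measure ℝ, m (Set.Iic 0) = 0 ∧
      (∃ ϰ : ℝ, ∫⁻ l in Set.Ioi (0:ℝ),
          ENNReal.ofReal ((1 + |Real.log l|) ^ (-ϰ) * l⁻¹) ∂m < ⊤) ∧
      ∀ᵐ t ∂(volume.restrict (Set.Ioi (0:ℝ))),
        h t = ∫ l in Set.Ioi (0:ℝ), Real.exp (-t * l) ∂m := by
  obtain ⟨κ, hκ⟩ := hκ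
  have hexp (ε : ℝ) (hε : ε > 0) :=
    integrableAtFilter_exp_neg_mul hε hloc.aestronglyMeasurable hκ
  obtain ⟨H, hH, hae⟩ := exists_completelyMonotoneOnIoi_ae_eq hloc hexp hpos
  obtain ⟨m, _, hIio, hm⟩ := hH.exists_measure_lintegral_exp_eq
  have hW : ∫⁻ l, logWeightLaplace κ l ∂m < ⊤ := by
    rw [lintegral_logWeightLaplace hm]
    refine (lintegral_mono_ae ?_).trans_lt hκ.lintegral_lt_top
    filter_upwards [hae] with t ht
    rw [ht, ENNReal.ofReal_mul (abs_nonneg _)]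
    gcongr
    exact le_abs_self _
  have hIic : m (Set.Iic 0) = 0 := by
    rw [← Set.Iio_union_right, measure_union_null_iff]
    exact ⟨hIio, measure_singleton_zero_of_lintegral_logWeightLaplace_lt_top hW⟩
  refine ⟨m, hIic, ⟨κ, setLIntegral_log_weight_lt_top_of_lintegral_logWeightLaplace_lt_top hW⟩, ?_⟩
  filter_upwards [ae_restrict_mem measurableSet_Ioi, hae] with t ht hht
  rw [hht, setIntegral_Ioi_exp_eq_of_lintegral_eq hIic (hH.nonneg ht) (hm t ht)]
end
end
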